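/- arXiv:0902.1587 — 13 statements merged into one kernel-verified Lean document; each statement's English description precedes it below -/
import Mathlib

section
/- If (X,≤) is a well quasi-ordered set, then every downward-closed subset of X is a finite union of ideals of X. -/
/-- An ideal of a quasi-ordered set: nonempty, downward closed, and directed. -/
def IsIdeal {X : Type*} [Preorder X] (S : Set X) : Prop :=
  S.Nonempty ∧ IsLowerSet S ∧ DirectedOn (· ≤ ·) S

/-- A quasi-ordering is a well quasi-ordering iff every infinite sequence contains an
infinite ascending subsequence. -/
def IsWqo (X : Type*) [Preorder X] : Prop :=
  ∀ f : ℕ → X, ∃ g : ℕ → ℕ, StrictMono g ∧ ∀ m n : ℕ, m ≤ n → f (g m) ≤ f (g n)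

theorem wf_lowerSet_aux {X : Type*} [Preorder X] (hwqo : IsWqo X) :
    WellFounded (fun A B : LowerSet X => A < B) := by
  rw [wellFounded_iff_isEmpty_descending_chain]
  refine ⟨fun ⟨f, hf⟩ => ?_⟩
  have hanti : StrictAnti f := strictAnti_nat_of_succ_lt hf
  have hx : ∀ n, ∃ x, x ∈ f n ∧ x ∉ f (n + 1) := fun n =>
    Set.exists_of_ssubset (show (f (n + 1) : Set X) ⊂ f n from hf n)
  choose x hx1 hx2 using hx
  obtain ⟨g, hg, hle⟩ := hwqo x
  have h01 : g 0 < g 1 := hg Nat.zero_lt_one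
  have hmem : x (g 0) ∈ f (g 1) := (f (g 1)).lower (hle 0 1 (Nat.zero_le 1)) (hx1 (g 1))
  exact hx2 (g 0) (hanti.antitone (Nat.succ_le_of_lt h01) hmem)

/-- If `(X, ≤)` is a well quasi-ordered set, then every downward-closed subset of `X` is a
finite union of ideals of `X`. -/
theorem stmt1 {X : Type*} [Preorder X] (hwqo : IsWqo X)
    (D : Set X) (hD : IsLowerSet D) :
    ∃ 𝒥 : Finset (Set X), (∀ I ∈ 𝒥, IsIdeal I) ∧ D = ⋃ I ∈ 𝒥, I := by
  classical
  suffices H : ∀ L : LowerSet X,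
      ∃ 𝒥 : Finset (Set X), (∀ I ∈ 𝒥, IsIdeal I) ∧ (L : Set X) = ⋃ I ∈ 𝒥, I from H ⟨D, hD⟩
  intro L
  induction L using (wf_lowerSet_aux hwqo).induction with
  | _ L ih =>
    by_cases hne : (L : Set X).Nonempty
    swap
    · refine ⟨∅, by simp, ?_⟩
      simpa using Set.not_nonempty_iff_eq_empty.mp hne
    by_cases hdir : DirectedOn (· ≤ ·) (L : Set X)
    · exact ⟨{(L : Set X)}, by simpa using ⟨hne, L.lower, hdir⟩, by simp⟩
    have hxy : ∃ x ∈ L, ∃ y ∈ L, ∀ z ∈ L, x ≤ z → ¬ y ≤ z := by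
      by_contra hcon
      push Not at hcon
      exact hdir fun x hx y hy => hcon x hx y hy
    obtain ⟨x, hx, y, hy, hno⟩ := hxy
    have key : ∀ a ∈ L, ∃ 𝒥 : Finset (Set X), (∀ I ∈ 𝒥, IsIdeal I) ∧
        {z | z ∈ L ∧ ¬ a ≤ z} = ⋃ I ∈ 𝒥, I := by
      intro a ha
      let M : LowerSet X := ⟨{z | z ∈ L ∧ ¬ a ≤ z}, fun u v hvu hu =>
        ⟨L.lower hvu hu.1, fun h => hu.2 (h.trans hvu)⟩⟩
      refine ih M (lt_of_le_not_ge (fun z hz => hz.1) fun h => ?_)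
      exact (h ha : a ∈ L ∧ ¬ a ≤ a).2 le_rfl
    obtain ⟨J, hJ, hJe⟩ := key x hx
    obtain ⟨K, hK, hKe⟩ := key y hy
    refine ⟨J ∪ K, fun I hI => (Finset.mem_union.mp hI).elim (hJ I) (hK I), ?_⟩
    rw [Finset.set_biUnion_union, ← hJe, ← hKe]
    ext z
    constructor
    · intro hz
      by_cases h : x ≤ z
      · exact Or.inr ⟨hz, hno z hz h⟩
      · exact Or.inl ⟨hz, h⟩
    · rintro (h | h) <;> exact h.1
end

section
/- Let (X,≤) be a quasi-ordered set and let Y be a collection of downward-closed subsets of X such that every downward-closed subset of X is the union of finitely many members of Y. Then every ideal of X belongs to Y. (Hence the set of ideals of X is the least possible such family: any weak adequate domain of limits on X must contain, up to the coding map, every ideal of X.) -/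
/-- Let `Y` be a collection of downward-closed subsets of a quasi-ordered set `X` such that
every downward-closed subset of `X` is the union of finitely many members of `Y`.  Then every
ideal of `X` belongs to `Y`.  (Hence the set of ideals is the least such family, and any weak
adequate domain of limits on `X` must contain, up to the coding map `γ`, every ideal of `X`.) -/
theorem stmt2 {X : Type*} [Preorder X] (Y : Set (Set X))
    (hY : ∀ S ∈ Y, IsLowerSet S)
    (hcover : ∀ D : Set X, IsLowerSet D →
      ∃ E : Finset (Set X), ↑E ⊆ Y ∧ D = ⋃ S ∈ E, S) :
    ∀ I : Set X, IsIdeal I → I ∈ Y := by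
  rintro I ⟨hne, hlow, hdir⟩
  obtain ⟨E, hEY, hE⟩ := hcover I hlow
  by_contra hI
  have key : ∀ F : Finset (Set X), F ⊆ E → ∃ z ∈ I, ∀ S ∈ F, z ∉ S := by
    classical
    intro F
    induction F using Finset.induction_on with
    | empty =>
      intro _
      obtain ⟨x, hx⟩ := hne
      exact ⟨x, hx, by simp⟩
    | insert T F _ ih =>
      intro hsub
      obtain ⟨z, hz, hzF⟩ := ih fun S hS => hsub (Finset.mem_insert_of_mem hS)
      have hTE : T ∈ E := hsub (Finset.mem_insert_self T F)
      have hTI : T ⊆ I := by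
        rw [hE]
        exact Set.subset_biUnion_of_mem (u := fun S : Set X => S) hTE
      have hnot : ¬ I ⊆ T := fun h =>
        hI (Set.Subset.antisymm hTI h ▸ hEY (Finset.mem_coe.2 hTE))
      obtain ⟨w, hw, hwT⟩ := Set.not_subset.1 hnot
      obtain ⟨u, hu, hzu, hwu⟩ := hdir z hz w hw
      refine ⟨u, hu, fun S hS huS => ?_⟩
      have hSE : S ∈ E := hsub hS
      have hSl := hY S (hEY (Finset.mem_coe.2 hSE))
      rcases Finset.mem_insert.1 hS with h | h
      · exact hwT (h ▸ hSl hwu huS)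
      · exact hzF S h (hSl hzu huS)
  obtain ⟨z, hz, hzE⟩ := key E (Finset.Subset.refl E)
  rw [hE] at hz
  obtain ⟨S, hS, hzS⟩ := Set.mem_iUnion₂.1 hz
  exact hzE S hS hzS
end

section
/- Let Y be a continuous poset. Then for every downward-closed subset A of Y, the closure of A in the Scott topology equals LUB_Y(A), the set of all elements of Y that are least upper bounds of directed subsets of A; moreover this set is also the smallest subset of Y containing A and closed under least upper bounds of directed families that exist in Y (the inductive hull of A). -/
/-- `x` is way below `y`: for every (nonempty) directed family with a least upper bound
`z ≥ y`, some member of the family is above `x`. -/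
def WayBelow {Y : Type*} [Preorder Y] (x y : Y) : Prop :=
  ∀ d : Set Y, d.Nonempty → DirectedOn (· ≤ ·) d → ∀ z : Y, IsLUB d z → y ≤ z →
    ∃ w ∈ d, x ≤ w

/-- A poset is continuous iff for every `y` the set of elements way below `y` is
(nonempty and) directed and has `y` as its least upper bound. -/
def ContinuousPoset (Y : Type*) [PartialOrder Y] : Prop :=
  ∀ y : Y, {x | WayBelow x y}.Nonempty ∧ DirectedOn (· ≤ ·) {x | WayBelow x y} ∧
    IsLUB {x | WayBelow x y} y

/-- Scott opens: upward-closed sets such that every (nonempty) directed family whose least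
upper bound lies in the set already meets the set. -/
def ScottOpen {Y : Type*} [Preorder Y] (U : Set Y) : Prop :=
  IsUpperSet U ∧ ∀ d : Set Y, d.Nonempty → DirectedOn (· ≤ ·) d → ∀ z : Y, IsLUB d z →
    z ∈ U → (d ∩ U).Nonempty

/-- The Scott topology. -/
def scottTop (Y : Type*) [Preorder Y] : TopologicalSpace Y where
  IsOpen := ScottOpen
  isOpen_univ := by
    refine ⟨isUpperSet_univ, fun d hd _ z _ _ => ?_⟩
    simpa using hd
  isOpen_inter := by
    rintro U V ⟨hU, hU'⟩ ⟨hV, hV'⟩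
    refine ⟨hU.inter hV, fun d hd hdir z hz hzUV => ?_⟩
    obtain ⟨x, hxd, hxU⟩ := hU' d hd hdir z hz hzUV.1
    obtain ⟨y, hyd, hyV⟩ := hV' d hd hdir z hz hzUV.2
    obtain ⟨w, hwd, hxw, hyw⟩ := hdir x hxd y hyd
    exact ⟨w, hwd, hU hxw hxU, hV hyw hyV⟩
  isOpen_sUnion := by
    intro S hS
    refine ⟨isUpperSet_sUnion fun U hU => (hS U hU).1, fun d hd hdir z hz hzS => ?_⟩
    obtain ⟨U, hUS, hzU⟩ := hzS
    obtain ⟨x, hxd, hxU⟩ := (hS U hUS).2 d hd hdir z hz hzU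
    exact ⟨x, hxd, U, hUS, hxU⟩

/-- `LUBset Y A`: the set of elements of `Y` that are least upper bounds of (nonempty)
directed subsets of `A`. -/
def LUBset {Y : Type*} [Preorder Y] (A : Set Y) : Set Y :=
  {y | ∃ d ⊆ A, d.Nonempty ∧ DirectedOn (· ≤ ·) d ∧ IsLUB d y}

/-- In a continuous poset `Y`, for every downward-closed subset `A`, the Scott closure of `A`
equals `LUBset A`, and this set is moreover the smallest subset of `Y` containing `A` and
closed under least upper bounds of directed families existing in `Y` (the inductive hull). -/
theorem stmt3 {Y : Type*} [PartialOrder Y] (hY : ContinuousPoset Y)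
    (A : Set Y) (hA : IsLowerSet A) :
    @closure Y (scottTop Y) A = LUBset A ∧
    A ⊆ LUBset A ∧
    (∀ d ⊆ LUBset A, d.Nonempty → DirectedOn (· ≤ ·) d → ∀ z : Y, IsLUB d z →
      z ∈ LUBset A) ∧
    (∀ S : Set Y, A ⊆ S →
      (∀ d ⊆ S, d.Nonempty → DirectedOn (· ≤ ·) d → ∀ z : Y, IsLUB d z → z ∈ S) →
      LUBset A ⊆ S) := by
  have wb_mono : ∀ {x y z : Y}, WayBelow x y → y ≤ z → WayBelow x z :=
    fun hxy hyz d hd hdir w hw hzw => hxy d hd hdir w hw (hyz.trans hzw)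
  have char : ∀ y, y ∈ LUBset A ↔ ∀ x, WayBelow x y → x ∈ A := by
    intro y
    constructor
    · rintro ⟨d, hdA, hd, hdir, hy⟩ x hx
      obtain ⟨w, hw, hxw⟩ := hx d hd hdir y hy le_rfl
      exact hA hxw (hdA hw)
    · intro h
      exact ⟨_, h, (hY y).1, (hY y).2.1, (hY y).2.2⟩
  have hsub : A ⊆ LUBset A := fun a ha =>
    ⟨{a}, by simpa using ha, Set.singleton_nonempty a, directedOn_singleton a,
      isLUB_singleton⟩
  have hlub : ∀ d ⊆ LUBset A, d.Nonempty → DirectedOn (· ≤ ·) d → ∀ z : Y, IsLUB d z →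
      z ∈ LUBset A := by
    intro d hdA hd hdir z hz
    refine ⟨{u | ∃ v ∈ d, WayBelow u v}, ?_, ?_, ?_, ?_, ?_⟩
    · rintro u ⟨v, hv, huv⟩
      exact (char v).1 (hdA hv) u huv
    · obtain ⟨v, hv⟩ := hd
      obtain ⟨u, hu⟩ := (hY v).1
      exact ⟨u, v, hv, hu⟩
    · rintro u₁ ⟨v₁, hv₁, h₁⟩ u₂ ⟨v₂, hv₂, h₂⟩
      obtain ⟨v, hv, h1, h2⟩ := hdir v₁ hv₁ v₂ hv₂
      obtain ⟨u, hu, hu1, hu2⟩ := (hY v).2.1 u₁ (wb_mono h₁ h1) u₂ (wb_mono h₂ h2)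
      exact ⟨u, ⟨v, hv, hu⟩, hu1, hu2⟩
    · rintro u ⟨v, hv, huv⟩
      exact ((hY v).2.2.1 huv).trans (hz.1 hv)
    · intro b hb
      exact hz.2 fun v hv => (hY v).2.2.2 fun u hu => hb ⟨v, hv, hu⟩
  have hmin : ∀ S : Set Y, A ⊆ S →
      (∀ d ⊆ S, d.Nonempty → DirectedOn (· ≤ ·) d → ∀ z : Y, IsLUB d z → z ∈ S) →
      LUBset A ⊆ S := by
    rintro S hAS hS y ⟨d, hdA, hd, hdir, hy⟩
    exact hS d (hdA.trans hAS) hd hdir y hy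
  refine ⟨?_, hsub, hlub, hmin⟩
  letI := scottTop Y
  apply Set.Subset.antisymm
  · refine closure_minimal hsub ⟨?_⟩
    refine (⟨?_, ?_⟩ : ScottOpen (LUBset A)ᶜ)
    · intro a b hab ha hb
      exact ha ((char a).2 fun x hx => (char b).1 hb x (wb_mono hx hab))
    · intro d hd hdir z hz hzA
      by_contra hne
      refine hzA (hlub d (fun v hv => ?_) hd hdir z hz)
      by_contra hv'
      exact hne ⟨v, hv, hv'⟩
  · refine hmin _ subset_closure ?_
    intro d hdS hd hdir z hz
    by_contra hzc
    have ho : ScottOpen (closure A)ᶜ := (isClosed_closure (s := A)).isOpen_compl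
    obtain ⟨v, hv, hv'⟩ := ho.2 d hd hdir z hz hzc
    exact hv' (hdS hv)
end

section
/- Let Y be a continuous dcpo having a basis B that is well-founded under the order of Y. Then Y is algebraic: its set K of compact elements (elements y with y ≪ y) is a basis, and Y is order-isomorphic to the ideal completion Idl(K) of K (the poset of ideals of K ordered by inclusion) via y ↦ {x ∈ K | x ≤ y}. Moreover, if B is well quasi-ordered (Y is well-based), then K is well quasi-ordered. -/
/-- `Y` is a dcpo: every (nonempty) directed family has a least upper bound. -/
def IsDcpo (Y : Type*) [PartialOrder Y] : Prop :=
  ∀ d : Set Y, d.Nonempty → DirectedOn (· ≤ ·) d → ∃ z : Y, IsLUB d z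

/-- `B` is a basis of `Y`: every `y ∈ Y` is the least upper bound of a (nonempty) directed
family of elements of `B` way below `y`. -/
def IsBasis {Y : Type*} [PartialOrder Y] (B : Set Y) : Prop :=
  ∀ y : Y, ∃ d ⊆ B, d.Nonempty ∧ DirectedOn (· ≤ ·) d ∧ (∀ x ∈ d, WayBelow x y) ∧ IsLUB d y

/-- `S` is an ideal of the sub-quasi-ordered set `K` of `Y`: a subset of `K` that is nonempty,
downward closed in `K`, and directed. -/
def IsIdealOn {Y : Type*} [Preorder Y] (K S : Set Y) : Prop :=
  S ⊆ K ∧ S.Nonempty ∧ (∀ x ∈ K, ∀ y ∈ S, x ≤ y → x ∈ S) ∧ DirectedOn (· ≤ ·) S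

/-- `B` is well quasi-ordered: every infinite sequence in `B` contains an infinite ascending
subsequence. -/
def WqoOn {Y : Type*} [Preorder Y] (B : Set Y) : Prop :=
  ∀ f : ℕ → Y, (∀ n, f n ∈ B) →
    ∃ g : ℕ → ℕ, StrictMono g ∧ ∀ m n : ℕ, m ≤ n → f (g m) ≤ f (g n)

theorem WayBelow.le' {Y : Type*} [PartialOrder Y] {x y : Y} (h : WayBelow x y) : x ≤ y := by
  obtain ⟨w, hw, hx⟩ := h {y} ⟨y, rfl⟩ (directedOn_singleton _) y isLUB_singleton le_rfl
  rw [Set.mem_singleton_iff] at hw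
  exact hw ▸ hx

theorem WayBelow.mono' {Y : Type*} [PartialOrder Y] {a x y b : Y} (h : WayBelow x y)
    (ha : a ≤ x) (hb : y ≤ b) : WayBelow a b := by
  intro d hn hd z hz hbz
  obtain ⟨w, hw, hx⟩ := h d hn hd z hz (hb.trans hbz)
  exact ⟨w, hw, ha.trans hx⟩

theorem IsBasis.interp {Y : Type*} [PartialOrder Y] {B : Set Y} (hB : IsBasis B) {x y : Y}
    (h : WayBelow x y) : ∃ c ∈ B, WayBelow x c ∧ WayBelow c y := by
  have key : ∀ z b₁ b₂ : Y, WayBelow b₁ z → WayBelow b₂ z →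
      ∃ c ∈ B, WayBelow c z ∧ b₁ ≤ c ∧ b₂ ≤ c := by
    intro z b₁ b₂ h₁ h₂
    obtain ⟨d, hdB, hn, hd, hw, hl⟩ := hB z
    obtain ⟨w₁, hw₁, l₁⟩ := h₁ d hn hd z hl le_rfl
    obtain ⟨w₂, hw₂, l₂⟩ := h₂ d hn hd z hl le_rfl
    obtain ⟨w, hwd, m₁, m₂⟩ := hd w₁ hw₁ w₂ hw₂
    exact ⟨w, hdB hwd, hw w hwd, l₁.trans m₁, l₂.trans m₂⟩
  obtain ⟨d, hdB, hn, hd, hw, hl⟩ := hB y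
  have hDn : {b | ∃ c ∈ B, WayBelow b c ∧ WayBelow c y}.Nonempty := by
    obtain ⟨c, hc⟩ := hn
    obtain ⟨e, -, ⟨b, hb⟩, -, he, -⟩ := hB c
    exact ⟨b, c, hdB hc, he b hb, hw c hc⟩
  have hDd : DirectedOn (· ≤ ·) {b | ∃ c ∈ B, WayBelow b c ∧ WayBelow c y} := by
    rintro b₁ ⟨c₁, -, h₁, h₁'⟩ b₂ ⟨c₂, -, h₂, h₂'⟩
    obtain ⟨c, hc, hcy, l₁, l₂⟩ := key y c₁ c₂ h₁' h₂'
    obtain ⟨b, -, hbc, m₁, m₂⟩ := key c b₁ b₂ (h₁.mono' le_rfl l₁) (h₂.mono' le_rfl l₂)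
    exact ⟨b, ⟨c, hc, hbc, hcy⟩, m₁, m₂⟩
  have hDl : IsLUB {b | ∃ c ∈ B, WayBelow b c ∧ WayBelow c y} y := by
    refine ⟨?_, fun u hu => hl.2 fun c hc => ?_⟩
    · rintro b ⟨c, -, h₁, h₂⟩
      exact h₁.le'.trans h₂.le'
    · obtain ⟨e, -, -, -, he, hle⟩ := hB c
      exact hle.2 fun b hb => hu ⟨c, hdB hc, he b hb, hw c hc⟩
  obtain ⟨b, ⟨c, hc, hbc, hcy⟩, hxb⟩ := h _ hDn hDd y hDl le_rfl
  exact ⟨c, hc, hbc.mono' hxb le_rfl, hcy⟩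

theorem IsBasis.exists_compact {Y : Type*} [PartialOrder Y] {B : Set Y} (hB : IsBasis B)
    (hwf : B.WellFoundedOn (· < ·)) {x y : Y} (h : WayBelow x y) :
    ∃ k, WayBelow k k ∧ x ≤ k ∧ k ≤ y := by
  obtain ⟨c, hc, hxc, hcy⟩ := hB.interp h
  obtain ⟨b, ⟨hxb, hby⟩, hmin⟩ := WellFounded.has_min hwf
    {b : B | WayBelow x b ∧ WayBelow (b : Y) y} ⟨⟨c, hc⟩, hxc, hcy⟩
  obtain ⟨a, ha, hxa, hab⟩ := hB.interp hxb
  have hnl : ¬ a < (b : Y) := hmin ⟨a, ha⟩ ⟨hxa, hab.mono' le_rfl hby.le'⟩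
  have e : a = b := by
    by_contra hne
    exact hnl (lt_of_le_of_ne hab.le' hne)
  rw [e] at hab
  exact ⟨b, hab, hxb.le', hby.le'⟩

/-- Let `Y` be a continuous dcpo having a basis `B` that is well-founded under the order of
`Y`.  Then `Y` is algebraic: its set `K` of compact elements (`y` with `y ≪ y`) is a basis,
and `y ↦ {x ∈ K | x ≤ y}` is an order isomorphism of `Y` onto the ideal completion `Idl(K)`
(ideals of `K` ordered by inclusion).  Moreover, if `B` is well quasi-ordered then so is `K`. -/
theorem stmt4 {Y : Type*} [PartialOrder Y] (hdcpo : IsDcpo Y)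
    (B : Set Y) (hB : IsBasis B) (hwf : B.WellFoundedOn (· < ·)) :
    IsBasis {y : Y | WayBelow y y} ∧
    (∀ y : Y, IsIdealOn {y : Y | WayBelow y y} {x : Y | WayBelow x x ∧ x ≤ y}) ∧
    (∀ y y' : Y, y ≤ y' ↔
      {x : Y | WayBelow x x ∧ x ≤ y} ⊆ {x : Y | WayBelow x x ∧ x ≤ y'}) ∧
    (∀ S : Set Y, IsIdealOn {y : Y | WayBelow y y} S →
      ∃ y : Y, {x : Y | WayBelow x x ∧ x ≤ y} = S) ∧
    (WqoOn B → WqoOn {y : Y | WayBelow y y}) := by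
  have hne : ∀ y : Y, {x : Y | WayBelow x x ∧ x ≤ y}.Nonempty := by
    intro y
    obtain ⟨d, -, ⟨x, hx⟩, -, hw, -⟩ := hB y
    obtain ⟨k, hk, -, hky⟩ := hB.exists_compact hwf (hw x hx)
    exact ⟨k, hk, hky⟩
  have hdir : ∀ y : Y, DirectedOn (· ≤ ·) {x : Y | WayBelow x x ∧ x ≤ y} := by
    rintro y k₁ ⟨h₁, l₁⟩ k₂ ⟨h₂, l₂⟩
    obtain ⟨d, -, hn, hd, hw, hl⟩ := hB y
    obtain ⟨w₁, hw₁, m₁⟩ := h₁ d hn hd y hl l₁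
    obtain ⟨w₂, hw₂, m₂⟩ := h₂ d hn hd y hl l₂
    obtain ⟨w, hwd, n₁, n₂⟩ := hd w₁ hw₁ w₂ hw₂
    obtain ⟨k, hk, hwk, hky⟩ := hB.exists_compact hwf (hw w hwd)
    exact ⟨k, ⟨hk, hky⟩, (m₁.trans n₁).trans hwk, (m₂.trans n₂).trans hwk⟩
  have hlub : ∀ y : Y, IsLUB {x : Y | WayBelow x x ∧ x ≤ y} y := by
    intro y
    refine ⟨fun x hx => hx.2, fun u hu => ?_⟩
    obtain ⟨d, -, hn, hd, hw, hl⟩ := hB y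
    refine hl.2 fun x hx => ?_
    obtain ⟨k, hk, hxk, hky⟩ := hB.exists_compact hwf (hw x hx)
    exact hxk.trans (hu ⟨hk, hky⟩)
  refine ⟨fun y => ⟨_, fun x hx => hx.1, hne y, hdir y,
      fun x hx => hx.1.mono' le_rfl hx.2, hlub y⟩,
    fun y => ⟨fun x hx => hx.1, hne y, fun x hx z hz hxz => ⟨hx, hxz.trans hz.2⟩, hdir y⟩,
    fun y y' => ⟨fun h x hx => ⟨hx.1, hx.2.trans h⟩,
      fun h => (hlub y).2 fun x hx => (h hx).2⟩, ?_, ?_⟩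
  · rintro S ⟨hSK, hSn, hSd, hS⟩
    obtain ⟨y, hy⟩ := hdcpo S hSn hS
    refine ⟨y, Set.Subset.antisymm ?_ fun x hx => ⟨hSK hx, hy.1 hx⟩⟩
    rintro x ⟨hx, hxy⟩
    obtain ⟨w, hw, hxw⟩ := hx S hSn hS y hy hxy
    exact hSd x hx w hw hxw
  · intro hq f hf
    refine hq f fun n => ?_
    obtain ⟨d, hdB, hn, hd, hw, hl⟩ := hB (f n)
    obtain ⟨w, hwd, hfw⟩ := hf n d hn hd _ hl le_rfl
    rw [le_antisymm hfw (hw w hwd).le']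
    exact hdB hwd
end

section
/- Let Σ be a finite alphabet and order Σ* by the divisibility (subsequence) ordering. The irreducible closed subsets of Σ* with the Alexandroff topology of this ordering (equivalently, the ideals of Σ*) are exactly the denotations of products. -/
/-- Atomic expressions over a finite alphabet `σ`: `a?` (denoting `{ε, a}`) and `A*`
(denoting all words over `A`), for `A` a (nonempty) set of letters. -/
inductive SAtom (σ : Type*) where
  | opt (a : σ)
  | star (A : Finset σ)

/-- Denotation of an atomic expression. -/
def SAtom.den {σ : Type*} : SAtom σ → Set (List σ)
  | .opt a => {[], [a]}
  | .star A => {w | ∀ x ∈ w, x ∈ A}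

/-- Denotation of a product `e₁e₂…eₙ`: the concatenation of the denotations. -/
def prodDen {σ : Type*} : List (SAtom σ) → Set (List σ)
  | [] => {[]}
  | e :: P => {w | ∃ u ∈ e.den, ∃ v ∈ prodDen P, w = u ++ v}

/-- Well-formedness of a product: every starred set of letters is nonempty. -/
def ValidProd {σ : Type*} (P : List (SAtom σ)) : Prop :=
  ∀ e ∈ P, ∀ A : Finset σ, e = .star A → A.Nonempty

/-- `S` is an ideal of `Σ*` for the divisibility (subsequence) ordering: nonempty,
downward closed and directed for `List.Sublist`. -/
def IsSublistIdeal {σ : Type*} (S : Set (List σ)) : Prop :=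
  S.Nonempty ∧ (∀ u v : List σ, u.Sublist v → v ∈ S → u ∈ S) ∧
    ∀ u ∈ S, ∀ v ∈ S, ∃ w ∈ S, u.Sublist w ∧ v.Sublist w

theorem den_ideal {σ : Type*} (e : SAtom σ) : IsSublistIdeal e.den := by
  cases e with
  | opt a =>
    refine ⟨⟨[], by simp [SAtom.den]⟩, ?_, ?_⟩
    · intro u v huv hv
      simp only [SAtom.den, Set.mem_insert_iff, Set.mem_singleton_iff] at hv ⊢
      rcases hv with rfl | rfl
      · left; exact List.sublist_nil.1 huv
      · exact List.sublist_singleton.1 huv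
    · intro u hu v hv
      refine ⟨[a], by simp [SAtom.den], ?_⟩
      simp only [SAtom.den, Set.mem_insert_iff, Set.mem_singleton_iff] at hu hv
      rcases hu with rfl | rfl <;> rcases hv with rfl | rfl <;> simp
  | star A =>
    refine ⟨⟨[], by simp [SAtom.den]⟩, ?_, ?_⟩
    · intro u v huv hv x hx
      exact hv x (huv.subset hx)
    · intro u hu v hv
      refine ⟨u ++ v, ?_, List.sublist_append_left _ _, List.sublist_append_right _ _⟩
      intro x hx
      rcases List.mem_append.1 hx with h | h
      · exact hu x h
      · exact hv x h

theorem prodDen_ideal {σ : Type*} (P : List (SAtom σ)) : IsSublistIdeal (prodDen P) := by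
  induction P with
  | nil =>
    refine ⟨⟨[], rfl⟩, ?_, ?_⟩
    · intro u v huv hv
      cases hv
      exact List.sublist_nil.1 huv
    · intro u hu v hv
      cases hu; cases hv
      exact ⟨[], rfl, List.Sublist.refl _, List.Sublist.refl _⟩
  | cons e P ih =>
    obtain ⟨⟨x, hx⟩, hl, hd⟩ := den_ideal e
    obtain ⟨⟨y, hy⟩, kl, kd⟩ := ih
    refine ⟨⟨x ++ y, x, hx, y, hy, rfl⟩, ?_, ?_⟩
    · rintro u _ huv ⟨v, hv, w, hw, rfl⟩
      obtain ⟨p, q, rfl, hp, hq⟩ := List.sublist_append_iff.1 huv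
      exact ⟨p, hl _ _ hp hv, q, kl _ _ hq hw, rfl⟩
    · rintro _ ⟨u, hu, u', hu', rfl⟩ _ ⟨v, hv, v', hv', rfl⟩
      obtain ⟨z, hz, h1, h2⟩ := hd u hu v hv
      obtain ⟨z', hz', h1', h2'⟩ := kd u' hu' v' hv'
      exact ⟨z ++ z', ⟨z, hz, z', hz', rfl⟩, h1.append h1', h2.append h2'⟩

theorem exists_residual {σ : Type*} (a : σ) (z : List σ) (ha : a ∈ z) :
    ∃ y, (a :: y).Sublist z ∧ ∀ w, (a :: w).Sublist z → w.Sublist y := by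
  induction z with
  | nil => simp at ha
  | cons b z ih =>
    by_cases hab : a = b
    · subst hab
      exact ⟨z, List.Sublist.refl _, fun w hw => List.cons_sublist_cons.1 hw⟩
    · have : a ∈ z := by
        rcases List.mem_cons.1 ha with h | h
        · exact absurd h hab
        · exact h
      obtain ⟨y, hy, h⟩ := ih this
      refine ⟨y, hy.cons b, fun w hw => h w ?_⟩
      cases hw with
      | cons _ h => exact h
      | cons_cons _ h => exact absurd rfl hab

theorem residual_ideal {σ : Type*} {D : Set (List σ)} (hD : IsSublistIdeal D) (a : σ)
    (ha : [a] ∈ D) : IsSublistIdeal {w | a :: w ∈ D} := by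
  obtain ⟨-, hl, hd⟩ := hD
  refine ⟨⟨[], ha⟩, ?_, ?_⟩
  · intro u v huv hv
    exact hl _ _ (huv.cons_cons a) hv
  · intro u hu v hv
    obtain ⟨z, hz, h1, h2⟩ := hd _ hu _ hv
    obtain ⟨y, hy, h⟩ := exists_residual a z (h1.subset (by simp))
    exact ⟨y, hl _ _ hy hz, h _ h1, h _ h2⟩

theorem ideal_finite_bound {σ ι : Type*} {D : Set (List σ)} (hD : IsSublistIdeal D)
    (x : ι → List σ) (hx : ∀ i, x i ∈ D) (T : Finset ι) :
    ∃ z ∈ D, ∀ i ∈ T, (x i).Sublist z := by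
  classical
  obtain ⟨⟨y, hy⟩, hl, hd⟩ := hD
  induction T using Finset.induction_on with
  | empty => exact ⟨y, hy, by simp⟩
  | insert i T _ ih =>
    obtain ⟨z, hz, h⟩ := ih
    obtain ⟨z', hz', h1, h2⟩ := hd _ hz _ (hx i)
    refine ⟨z', hz', ?_⟩
    intro j hj
    rcases Finset.mem_insert.1 hj with rfl | hj
    · exact h2
    · exact (h j hj).trans h1

theorem ideal_irreducible {σ ι : Type*} [Fintype ι] {D : Set (List σ)} (hD : IsSublistIdeal D)
    (F : ι → Set (List σ)) (hF : ∀ i, ∀ u v : List σ, u.Sublist v → v ∈ F i → u ∈ F i)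
    (hDF : ∀ w ∈ D, ∃ i, w ∈ F i) : ∃ i, D ⊆ F i := by
  by_contra hcon
  simp only [not_exists, Set.not_subset] at hcon
  choose x hx hxF using hcon
  obtain ⟨z, hz, h⟩ := ideal_finite_bound hD x hx Finset.univ
  obtain ⟨i, hi⟩ := hDF z hz
  exact hxF i (hF i _ _ (h i (Finset.mem_univ i)) hi)

theorem higman_words {σ : Type*} [Finite σ] (f : ℕ → List σ) :
    ∃ m n, m < n ∧ (f m).Sublist (f n) := by
  have h := Set.PartiallyWellOrderedOn.partiallyWellOrderedOn_sublistForall₂ (α := σ) (Eq)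
    (s := Set.univ) (Set.finite_univ.partiallyWellOrderedOn)
  obtain ⟨m, n, hmn, h⟩ := h (fun n => ⟨f n, by simp⟩)
  refine ⟨m, n, hmn, ?_⟩
  obtain ⟨l, h1, h2⟩ := List.sublistForall₂_iff.1 h
  rw [List.forall₂_eq_eq_eq] at h1
  subst h1
  exact h2

theorem ideals_wf {σ : Type*} [Finite σ] :
    WellFounded (fun D E : {S : Set (List σ) // IsSublistIdeal S} => D.1 ⊂ E.1) := by
  rw [wellFounded_iff_isEmpty_descending_chain]
  refine ⟨?_⟩
  rintro ⟨f, hf⟩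
  have hex : ∀ n, ∃ x, x ∈ (f n).1 ∧ x ∉ (f (n+1)).1 := fun n =>
    Set.exists_of_ssubset (hf n)
  choose x hx hx' using hex
  have hanti : Antitone (fun n => (f n).1) := antitone_nat_of_succ_le (fun n => (hf n).subset)
  obtain ⟨m, n, hmn, h⟩ := higman_words x
  exact hx' m ((f (m+1)).2.2.1 _ _ h (hanti (Nat.succ_le_of_lt hmn) (hx n)))

theorem exists_star_cons {σ : Type*} (A : Finset σ) (P : List (SAtom σ)) (hP : ValidProd P) :
    ∃ Q, ValidProd Q ∧
      prodDen Q = {w | ∃ u, (∀ x ∈ u, x ∈ A) ∧ ∃ v ∈ prodDen P, w = u ++ v} := by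
  rcases A.eq_empty_or_nonempty with rfl | hA
  · refine ⟨P, hP, ?_⟩
    ext w
    constructor
    · intro h
      exact ⟨[], by simp, w, h, rfl⟩
    · rintro ⟨u, hu, v, hv, rfl⟩
      have : u = [] := List.eq_nil_iff_forall_not_mem.2 (fun x hx => by simpa using hu x hx)
      subst this
      exact hv
  · refine ⟨.star A :: P, ?_, rfl⟩
    intro e he B hB
    rcases List.mem_cons.1 he with rfl | he
    · cases hB
      exact hA
    · exact hP e he B hB

theorem ideal_is_prod {σ : Type*} [Fintype σ] (D : {S : Set (List σ) // IsSublistIdeal S}) :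
    ∃ P : List (SAtom σ), ValidProd P ∧ D.1 = prodDen P := by
  classical
  refine ideals_wf.induction (C := fun D : {S : Set (List σ) // IsSublistIdeal S} =>
    ∃ P : List (SAtom σ), ValidProd P ∧ D.1 = prodDen P) D ?_
  clear D
  intro D ih
  obtain ⟨D, hD⟩ := D
  simp only at ih ⊢
  have hl := hD.2.1
  -- letters that can be prepended freely
  let A : Finset σ := Finset.univ.filter (fun a => ∀ w ∈ D, a :: w ∈ D)
  have hA : ∀ a, a ∈ A ↔ ∀ w ∈ D, a :: w ∈ D := fun a => by simp [A]
  have hAD : ∀ u : List σ, (∀ x ∈ u, x ∈ A) → ∀ v ∈ D, u ++ v ∈ D := by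
    intro u
    induction u with
    | nil => intro _ v hv; exact hv
    | cons a u ihu =>
      intro hu v hv
      exact (hA a).1 (hu a (by simp)) _ (ihu (fun x hx => hu x (by simp [hx])) v hv)
  have hnil : [] ∈ D := by
    obtain ⟨x, hx⟩ := hD.1
    exact hl _ _ (List.nil_sublist x) hx
  have hres : ∀ b, [b] ∈ D → b ∉ A →
      ∃ Q : List (SAtom σ), ValidProd Q ∧
        prodDen Q = {w | ∃ u, (∀ x ∈ u, x ∈ A) ∧ ∃ v, (v = [] ∨ v = [b]) ∧ ∃ t, b :: t ∈ D ∧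
          w = u ++ (v ++ t)} := by
    intro b hb hbA
    obtain ⟨P, hP, hPe⟩ := ih ⟨_, residual_ideal hD b hb⟩ (by
      refine ⟨fun w hw => hl _ _ (List.sublist_cons_self b w) hw, fun h => hbA ?_⟩
      rw [hA]
      exact fun w hw => h hw)
    have hV : ValidProd (SAtom.opt b :: P) := by
      intro e he B hB
      rcases List.mem_cons.1 he with rfl | he
      · cases hB
      · exact hP e he B hB
    obtain ⟨Q, hQ, hQe⟩ := exists_star_cons A _ hV
    refine ⟨Q, hQ, ?_⟩
    rw [hQe]
    simp only at hPe
    ext w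
    constructor
    · rintro ⟨u, hu, _, ⟨v, hv, t, ht, rfl⟩, rfl⟩
      rw [← hPe] at ht
      exact ⟨u, hu, v, hv, t, ht, rfl⟩
    · rintro ⟨u, hu, v, hv, t, ht, rfl⟩
      refine ⟨u, hu, _, ⟨v, hv, t, ?_, rfl⟩, rfl⟩
      rw [← hPe]
      exact ht
  choose Q hQ hQe using hres
  let F : Option σ → Set (List σ) := fun o => match o with
    | none => {w | ∀ x ∈ w, x ∈ A}
    | some b => {w | ∃ (h1 : [b] ∈ D) (h2 : b ∉ A), w ∈ prodDen (Q b h1 h2)}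
  obtain ⟨i, hi⟩ := ideal_irreducible hD F (by
    rintro (_ | b) u v huv hv
    · exact fun x hx => hv x (huv.subset hx)
    · obtain ⟨h1, h2, hv⟩ := hv
      exact ⟨h1, h2, (prodDen_ideal _).2.1 _ _ huv hv⟩) (by
    intro w hw
    by_cases hwA : ∀ x ∈ w, x ∈ A
    · exact ⟨none, hwA⟩
    · have key : ∀ w : List σ, (¬ ∀ x ∈ w, x ∈ A) →
          ∃ u b t, w = u ++ b :: t ∧ (∀ x ∈ u, x ∈ A) ∧ b ∉ A := by
        intro w
        induction w with
        | nil => intro h; simp at h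
        | cons a w ihw =>
          intro h
          by_cases ha : a ∈ A
          · obtain ⟨u, b, t, rfl, hu, hb⟩ := ihw (fun h' => h (by
              intro x hx
              rcases List.mem_cons.1 hx with rfl | hx
              · exact ha
              · exact h' x hx))
            refine ⟨a :: u, b, t, rfl, ?_, hb⟩
            intro x hx
            rcases List.mem_cons.1 hx with rfl | hx
            · exact ha
            · exact hu x hx
          · exact ⟨[], a, w, rfl, by simp, ha⟩
      obtain ⟨u, b, t, rfl, hu, hb⟩ := key w hwA
      have hbt : b :: t ∈ D := hl _ _ (List.sublist_append_right u _) hw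
      have hb1 : [b] ∈ D := hl _ _ (by simp) hbt
      refine ⟨some b, hb1, hb, ?_⟩
      rw [hQe]
      exact ⟨u, hu, [b], Or.inr rfl, t, hbt, rfl⟩)
  rcases i with _ | b
  · obtain ⟨R, hR, hRe⟩ := exists_star_cons A [] (by intro e he; simp at he)
    refine ⟨R, hR, ?_⟩
    rw [hRe]
    ext w
    constructor
    · intro hw
      exact ⟨w, hi hw, [], rfl, by simp⟩
    · rintro ⟨u, hu, v, hv, rfl⟩
      cases hv
      exact hAD u hu _ hnil
  · obtain ⟨h1, h2, -⟩ := hi hnil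
    refine ⟨Q b h1 h2, hQ b h1 h2, ?_⟩
    apply Set.Subset.antisymm
    · intro w hw
      obtain ⟨_, _, h⟩ := hi hw
      exact h
    · intro w hw
      rw [hQe] at hw
      obtain ⟨u, hu, v, hv, t, ht, rfl⟩ := hw
      refine hAD u hu _ ?_
      rcases hv with rfl | rfl
      · exact hl _ _ (List.sublist_cons_self b t) ht
      · exact ht

/-- For a finite alphabet `σ`, the ideals of `σ*` under the divisibility (subsequence)
ordering — equivalently, the irreducible closed subsets of `σ*` in the Alexandroff topology
of that ordering — are exactly the denotations of products. -/
theorem stmt5 {σ : Type*} [Fintype σ] (S : Set (List σ)) :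
    IsSublistIdeal S ↔ ∃ P : List (SAtom σ), ValidProd P ∧ S = prodDen P := by
  constructor
  · intro h
    exact ideal_is_prod ⟨S, h⟩
  · rintro ⟨P, -, rfl⟩
    exact prodDen_ideal P
end

section
/- Let Σ be a finite alphabet and order Σ* by the divisibility (subsequence) ordering. The downward-closed subsets of Σ* are exactly the denotations of simple regular expressions (SREs), i.e., of finite sums of products. -/
def IsSRE {σ : Type*} (S : Set (List σ)) : Prop :=
  ∃ Ps : List (List (SAtom σ)), (∀ P ∈ Ps, ValidProd P) ∧ S = ⋃ P ∈ Ps, prodDen P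

def catDen {σ : Type*} (e : SAtom σ) (S : Set (List σ)) : Set (List σ) :=
  {w | ∃ u ∈ e.den, ∃ v ∈ S, w = u ++ v}

theorem IsSRE.empty {σ : Type*} : IsSRE (∅ : Set (List σ)) := ⟨[], by simp, by simp⟩

theorem IsSRE.nil {σ : Type*} : IsSRE ({[]} : Set (List σ)) :=
  ⟨[[]], by simp [ValidProd], by simp [prodDen]⟩

theorem IsSRE.union {σ : Type*} {S T : Set (List σ)} (hS : IsSRE S) (hT : IsSRE T) :
    IsSRE (S ∪ T) := by
  obtain ⟨Ps, h1, rfl⟩ := hS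
  obtain ⟨Qs, h2, rfl⟩ := hT
  refine ⟨Ps ++ Qs, ?_, ?_⟩
  · intro P hP
    rcases List.mem_append.1 hP with h | h
    · exact h1 P h
    · exact h2 P h
  · ext w
    simp only [Set.mem_union, Set.mem_iUnion, List.mem_append, exists_prop]
    grind

theorem IsSRE.cat {σ : Type*} {S : Set (List σ)} (e : SAtom σ)
    (he : ∀ A : Finset σ, e = .star A → A.Nonempty) (hS : IsSRE S) : IsSRE (catDen e S) := by
  obtain ⟨Ps, h1, rfl⟩ := hS
  refine ⟨Ps.map (e :: ·), ?_, ?_⟩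
  · intro P hP
    obtain ⟨Q, hQ, rfl⟩ := List.mem_map.1 hP
    intro e' he'
    rcases List.mem_cons.1 he' with rfl | h
    · exact he
    · exact h1 Q hQ e' h
  · ext w
    simp only [catDen, Set.mem_ofPred_eq, Set.mem_iUnion, List.mem_map, exists_prop]
    constructor
    · rintro ⟨u, hu, v, ⟨P, hP, hv⟩, rfl⟩
      exact ⟨e :: P, ⟨P, hP, rfl⟩, u, hu, v, hv, rfl⟩
    · rintro ⟨_, ⟨P, hP, rfl⟩, u, hu, v, hv, rfl⟩
      exact ⟨u, hu, v, ⟨P, hP, hv⟩, rfl⟩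

theorem IsSRE.opt {σ : Type*} {S : Set (List σ)} (a : σ) (hS : IsSRE S) :
    IsSRE (catDen (.opt a) S) := hS.cat _ (by simp)

theorem IsSRE.star {σ : Type*} {S : Set (List σ)} (A : Finset σ) (hS : IsSRE S) :
    IsSRE (catDen (.star A) S) := by
  rcases A.eq_empty_or_nonempty with rfl | h
  · have : catDen (.star ∅) S = S := by
      ext w
      simp [catDen, SAtom.den, ← List.eq_nil_iff_forall_not_mem]
    rwa [this]
  · exact hS.cat _ (by rintro B hB; cases hB; exact h)

def avoid {σ : Type*} (w : List σ) (S : Set (List σ)) : Set (List σ) :=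
  {v | v ∈ S ∧ ¬ w.Sublist v}

theorem sub_skip {σ : Type*} {a : σ} {w u v : List σ} (h : a ∉ u) :
    (a :: w).Sublist (u ++ v) ↔ (a :: w).Sublist v := by
  induction u with
  | nil => simp
  | cons b u ih =>
    simp only [List.mem_cons, not_or] at h
    rw [← ih h.2, List.cons_append]
    constructor
    · intro h'
      cases h' with
      | cons _ h' => exact h'
      | cons_cons _ h' => exact absurd rfl h.1
    · exact fun h' => h'.cons _

theorem tail_sub {σ : Type*} {a : σ} {w v : List σ} (h : (a :: w).Sublist v) : w.Sublist v :=
  (List.sublist_cons_self a w).trans h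

theorem avoid_prod {σ : Type*} (w : List σ) :
    ∀ P : List (SAtom σ), ValidProd P → IsSRE (avoid w (prodDen P)) := by
  classical
  induction w with
  | nil =>
    intro P _
    have : avoid [] (prodDen P) = ∅ := by ext; simp [avoid]
    rw [this]; exact .empty
  | cons a w ihw =>
    intro P
    induction P with
    | nil =>
      intro _
      have : avoid (a :: w) (prodDen []) = {[]} := by
        ext v
        simp only [avoid, prodDen, Set.mem_ofPred_eq, Set.mem_singleton_iff]
        constructor
        · exact fun h => h.1
        · rintro rfl; simp
      rw [this]; exact .nil
    | cons e P ihP =>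
      intro hv
      have hP : ValidProd P := fun e' he' => hv e' (List.mem_cons_of_mem _ he')
      have ihP := ihP hP
      cases e with
      | opt b =>
        by_cases hab : b = a
        · subst hab
          have : avoid (b :: w) (prodDen (.opt b :: P)) =
              avoid (b :: w) (prodDen P) ∪ catDen (.opt b) (avoid w (prodDen P)) := by
            ext x
            simp only [avoid, prodDen, catDen, SAtom.den, Set.mem_ofPred_eq, Set.mem_union,
              Set.mem_insert_iff, Set.mem_singleton_iff]
            constructor
            · rintro ⟨⟨u, rfl | rfl, v, hv, rfl⟩, hx⟩
              · exact .inl ⟨hv, hx⟩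
              · exact .inr ⟨[b], .inr rfl, v, ⟨hv, fun h => hx (h.cons_cons b)⟩, rfl⟩
            · rintro (⟨h1, h2⟩ | ⟨u, rfl | rfl, v, ⟨hv, hx⟩, rfl⟩)
              · exact ⟨⟨[], .inl rfl, x, h1, rfl⟩, h2⟩
              · exact ⟨⟨[], .inl rfl, _, hv, rfl⟩, fun h => hx (tail_sub h)⟩
              · exact ⟨⟨[b], .inr rfl, v, hv, rfl⟩, fun h => hx (List.cons_sublist_cons.1 h)⟩
          rw [this]
          exact ihP.union ((ihw P hP).opt b)
        · have : avoid (a :: w) (prodDen (.opt b :: P)) =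
              catDen (.opt b) (avoid (a :: w) (prodDen P)) := by
            have key : ∀ u v : List σ, (u = [] ∨ u = [b]) →
                ((a :: w).Sublist (u ++ v) ↔ (a :: w).Sublist v) := by
              rintro u v (rfl | rfl) <;> apply sub_skip
              · simp
              · simpa using fun h => hab h.symm
            ext x
            simp only [avoid, prodDen, catDen, SAtom.den, Set.mem_ofPred_eq,
              Set.mem_insert_iff, Set.mem_singleton_iff]
            constructor
            · rintro ⟨⟨u, hu, v, hv, rfl⟩, hx⟩
              exact ⟨u, hu, v, ⟨hv, fun h => hx ((key u v hu).2 h)⟩, rfl⟩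
            · rintro ⟨u, hu, v, ⟨hv, hx⟩, rfl⟩
              exact ⟨⟨u, hu, v, hv, rfl⟩, fun h => hx ((key u v hu).1 h)⟩
          rw [this]
          exact ihP.opt b
      | star A =>
        have : avoid (a :: w) (prodDen (.star A :: P)) =
            catDen (.star (A.erase a)) (avoid (a :: w) (prodDen P)) ∪
            (if a ∈ A then catDen (.star (A.erase a)) (catDen (.opt a)
              (avoid w (prodDen (.star A :: P)))) else ∅) := by
          ext x
          simp only [Set.mem_union]
          constructor
          · rintro ⟨⟨u, hu, v, hv, rfl⟩, hx⟩
            by_cases hau : a ∈ u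
            · right
              rw [if_pos (hu a hau)]
              obtain ⟨s, t, rfl, hs⟩ := List.eq_append_cons_of_mem hau
              refine ⟨s, ?_, a :: (t ++ v), ⟨[a], .inr rfl, t ++ v, ⟨⟨t, ?_, v, hv, rfl⟩, ?_⟩, rfl⟩,
                by simp⟩
              · intro y hy
                exact Finset.mem_erase.2 ⟨fun h => hs (h ▸ hy), hu y (by simp [hy])⟩
              · intro y hy
                exact hu y (by simp [hy])
              · intro h
                apply hx
                rw [List.append_assoc, sub_skip hs]
                exact h.cons_cons a
            · left
              refine ⟨u, ?_, v, ⟨hv, fun h => hx ((sub_skip hau).2 h)⟩, rfl⟩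
              intro y hy
              exact Finset.mem_erase.2 ⟨fun h => hau (h ▸ hy), hu y hy⟩
          · rintro (⟨u, hu, v, ⟨hv, hx⟩, rfl⟩ | h)
            · refine ⟨⟨u, fun y hy => Finset.mem_of_mem_erase (hu y hy), v, hv, rfl⟩, fun h => hx ?_⟩
              exact (sub_skip (fun hy => by simpa using hu a hy)).1 h
            · split_ifs at h with ha
              · obtain ⟨s, hs, _, ⟨o, ho, _, ⟨⟨t, ht, v, hv, rfl⟩, hx⟩, rfl⟩, rfl⟩ := h
                have has : a ∉ s := fun hy => by simpa using hs a hy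
                have ho' : o = [] ∨ o = [a] := ho
                refine ⟨⟨s ++ (o ++ t), ?_, v, hv, by simp⟩, fun h => hx ?_⟩
                · intro y hy
                  rcases List.mem_append.1 hy with hy | hy
                  · exact Finset.mem_of_mem_erase (hs y hy)
                  rcases List.mem_append.1 hy with hy | hy
                  · rcases ho' with rfl | rfl
                    · simp at hy
                    · rw [List.mem_singleton.1 hy]; exact ha
                  · exact ht y hy
                · rw [sub_skip has] at h
                  rcases ho' with rfl | rfl
                  · exact tail_sub h
                  · exact List.cons_sublist_cons.1 h
              · exact h.elim
        rw [this]
        refine (ihP.star _).union ?_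
        split_ifs
        · exact ((ihw _ hv).opt a).star _
        · exact .empty

theorem IsSRE.avoid {σ : Type*} {S : Set (List σ)} (w : List σ) (hS : IsSRE S) :
    IsSRE (avoid w S) := by
  obtain ⟨Ps, h, rfl⟩ := hS
  induction Ps with
  | nil =>
    have : _root_.avoid w (⋃ P ∈ ([] : List (List (SAtom σ))), prodDen P) = ∅ := by
      ext; simp [_root_.avoid]
    rw [this]; exact .empty
  | cons P Ps ih =>
    have : _root_.avoid w (⋃ Q ∈ P :: Ps, prodDen Q) =
        _root_.avoid w (prodDen P) ∪ _root_.avoid w (⋃ Q ∈ Ps, prodDen Q) := by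
      ext; simp [_root_.avoid, or_and_right]
    rw [this]
    exact (avoid_prod w P (h P (by simp))).union
      (ih (fun Q hQ => h Q (List.mem_cons_of_mem _ hQ)))

theorem IsSRE.avoidAll {σ : Type*} [Fintype σ] {F : Set (List σ)} (hF : F.Finite) :
    IsSRE {v | ∀ w ∈ F, ¬ w.Sublist v} := by
  induction F, hF using Set.Finite.induction_on with
  | empty =>
    have : {v : List σ | ∀ w ∈ (∅ : Set (List σ)), ¬ w.Sublist v} =
        catDen (.star Finset.univ) {[]} := by
      ext; simp [catDen, SAtom.den]
    rw [this]; exact IsSRE.nil.star _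
  | @insert w F _ _ ih =>
    have : {v : List σ | ∀ x ∈ insert w F, ¬ x.Sublist v} =
        _root_.avoid w {v | ∀ x ∈ F, ¬ x.Sublist v} := by
      ext; simp [_root_.avoid, and_comm]
    rw [this]; exact ih.avoid w

theorem prodDen_down {σ : Type*} (P : List (SAtom σ)) :
    ∀ u v : List σ, u.Sublist v → v ∈ prodDen P → u ∈ prodDen P := by
  induction P with
  | nil =>
    intro u v h hv
    have hv : v = [] := hv
    subst hv
    exact List.sublist_nil.1 h
  | cons e P ih =>
    rintro u _ h ⟨s, hs, t, ht, rfl⟩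
    obtain ⟨s', t', rfl, h1, h2⟩ := List.sublist_append_iff.1 h
    refine ⟨s', ?_, t', ih _ _ h2 ht, rfl⟩
    cases e with
    | opt a =>
      rcases hs with rfl | hs
      · exact .inl (List.sublist_nil.1 h1)
      · have hs : s = [a] := hs
        subst hs
        rcases List.sublist_singleton.1 h1 with rfl | rfl
        · exact .inl rfl
        · exact .inr rfl
    | star A => exact fun x hx => hs x (h1.subset hx)

theorem higman_antichain {σ : Type*} [Fintype σ] {F : Set (List σ)}
    (hF : IsAntichain List.Sublist F) : F.Finite := by
  have h : (Set.univ : Set σ).PartiallyWellOrderedOn (· = ·) :=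
    Set.finite_univ.partiallyWellOrderedOn
  have h2 := h.partiallyWellOrderedOn_sublistForall₂ (· = ·)
  have h3 : F.PartiallyWellOrderedOn List.Sublist := by
    intro f
    obtain ⟨m, n, hmn, hr⟩ := h2 (fun n => ⟨(f n).1, by simp⟩)
    refine ⟨m, n, hmn, ?_⟩
    obtain ⟨l, hl, hs⟩ := List.sublistForall₂_iff.1 hr
    rw [List.forall₂_eq_eq_eq] at hl
    have hl : (f m).1 = l := hl
    subst hl
    exact hs
  exact hF.finite_of_partiallyWellOrderedOn h3

theorem stmt6 {σ : Type*} [Fintype σ] (D : Set (List σ)) :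
    (∀ u v : List σ, u.Sublist v → v ∈ D → u ∈ D) ↔
    ∃ Ps : List (List (SAtom σ)), (∀ P ∈ Ps, ValidProd P) ∧ D = ⋃ P ∈ Ps, prodDen P := by
  constructor
  · intro hD
    let F : Set (List σ) := {w | w ∉ D ∧ ∀ u : List σ, u.Sublist w → u ∉ D → u = w}
    have hF : F.Finite := by
      apply higman_antichain
      intro x hx y hy hne hs
      exact hne (hy.2 x hs hx.1)
    have hmin : ∀ n : ℕ, ∀ v : List σ, v.length = n → v ∉ D → ∃ w ∈ F, w.Sublist v := by
      intro n
      induction n using Nat.strong_induction_on with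
      | _ n ih =>
        intro v hn hv
        by_cases hvF : v ∈ F
        · exact ⟨v, hvF, List.Sublist.refl v⟩
        · have : ∃ u : List σ, u.Sublist v ∧ u ∉ D ∧ u ≠ v := by
            by_contra hc
            push Not at hc
            exact hvF ⟨hv, hc⟩
          obtain ⟨u, hu, huD, hne⟩ := this
          have hlt : u.length < n := by
            rcases Nat.lt_or_ge u.length v.length with h | h
            · omega
            · exact absurd (hu.eq_of_length_le h) hne
          obtain ⟨w, hw, hwu⟩ := ih _ hlt u rfl huD
          exact ⟨w, hw, hwu.trans hu⟩
    have hDF : D = {v | ∀ w ∈ F, ¬ w.Sublist v} := by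
      ext v
      constructor
      · intro hv w hw hs
        exact hw.1 (hD w v hs hv)
      · intro hv
        by_contra hc
        obtain ⟨w, hw, hs⟩ := hmin _ v rfl hc
        exact hv w hw hs
    have := IsSRE.avoidAll hF
    rw [← hDF] at this
    exact this
  · rintro ⟨Ps, _, rfl⟩ u v h hv
    simp only [Set.mem_iUnion] at hv ⊢
    obtain ⟨P, hP, hv⟩ := hv
    exact ⟨P, hP, prodDen_down P u v h hv⟩
end

section
/- Let (X,≤) be a well quasi-ordered set and order the set X* of finite words over X by the embedding quasi-ordering ≤*. The ideals of (X*, ≤*) (equivalently, the irreducible closed subsets of X* with the Alexandroff topology of ≤*) are exactly the denotations of products over X. -/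
/-- Word embedding: `a₁…a_m` embeds into `w₀a′₁w₁…w_{m−1}a′_m w_m` whenever `r aᵢ a′ᵢ`
for all `i`.  (`WordEmb (· ≤ ·)` is the embedding quasi-ordering `≤*`.) -/
inductive WordEmb {α β : Type*} (r : α → β → Prop) : List α → List β → Prop where
  | nil (l : List β) : WordEmb r [] l
  | cons {a : α} {b : β} {l₁ : List α} {l₂ : List β} :
      r a b → WordEmb r l₁ l₂ → WordEmb r (a :: l₁) (b :: l₂)
  | skip {b : β} {l₁ : List α} {l₂ : List β} :
      WordEmb r l₁ l₂ → WordEmb r l₁ (b :: l₂)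

/-- Atomic expressions over `X`: `C?` with `C` an ideal of `X`, denoting the words of length
at most 1 with letter in `C`, and `A*` with `A` a finite nonempty set of ideals of `X`,
denoting all words with letters in `⋃ A`. -/
inductive WAtom (X : Type*) where
  | opt (C : Set X)
  | star (A : Finset (Set X))

/-- Denotation of atomic expressions over `X`. -/
def WAtom.den {X : Type*} : WAtom X → Set (List X)
  | .opt C => {[]} ∪ {w | ∃ x ∈ C, w = [x]}
  | .star A => {w | ∀ x ∈ w, ∃ C ∈ A, x ∈ C}

/-- Denotation of a product `e₁e₂…e_k`: the concatenation of the denotations. -/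
def wprodDen {X : Type*} : List (WAtom X) → Set (List X)
  | [] => {[]}
  | e :: P => {w | ∃ u ∈ e.den, ∃ v ∈ wprodDen P, w = u ++ v}

/-- Well-formedness of atomic expressions: `C` is an ideal of `X` in `C?`, and `A` is a
finite nonempty set of ideals of `X` in `A*`. -/
def WValidAtom {X : Type*} [Preorder X] : WAtom X → Prop
  | .opt C => IsIdeal C
  | .star A => A.Nonempty ∧ ∀ C ∈ A, IsIdeal C

section GenericWqo

variable {Y : Type*} [Preorder Y]

theorem lowerSet_wf (h : WellQuasiOrdered (fun a b : Y => a ≤ b)) :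
    WellFounded (fun A B : LowerSet Y => A < B) := by
  rw [wellFounded_iff_isEmpty_descending_chain]
  refine ⟨fun ⟨f, hf⟩ => ?_⟩
  have hanti : StrictAnti f := strictAnti_nat_of_succ_lt hf
  have hx : ∀ n, ∃ x, x ∈ f n ∧ x ∉ f (n + 1) := fun n =>
    Set.exists_of_ssubset (hf n)
  choose x hx1 hx2 using hx
  obtain ⟨m, n, hmn, hle⟩ := h x
  exact hx2 m ((f (m + 1)).lower hle (hanti.antitone (Nat.succ_le_of_lt hmn) (hx1 n)))

theorem lower_finite_union (h : WellQuasiOrdered (fun a b : Y => a ≤ b)) (D : LowerSet Y) :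
    ∃ F : Finset (Set Y), (∀ C ∈ F, IsIdeal C) ∧ ∀ x, x ∈ D ↔ ∃ C ∈ F, x ∈ C := by
  classical
  induction D using (lowerSet_wf h).induction with
  | _ D ih =>
  by_cases hne : (D : Set Y).Nonempty
  · by_cases hd : DirectedOn (· ≤ ·) (D : Set Y)
    · exact ⟨{(D : Set Y)}, by simpa using ⟨hne, D.lower, hd⟩, by simp⟩
    · simp only [DirectedOn, not_forall] at hd
      obtain ⟨x, hx, y, hy, hxy⟩ := hd
      let R : Y → LowerSet Y := fun a =>
        ⟨{z | z ∈ D ∧ ¬ a ≤ z}, fun p q hqp hp => ⟨D.lower hqp hp.1, fun hq => hp.2 (hq.trans hqp)⟩⟩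
      have hlt : ∀ a ∈ D, R a < D := fun a ha => by
        refine lt_of_le_of_ne (fun z hz => hz.1) fun he => ?_
        have : a ∈ R a := by rw [he]; exact ha
        exact this.2 le_rfl
      obtain ⟨F, hF1, hF2⟩ := ih _ (hlt x hx)
      obtain ⟨G, hG1, hG2⟩ := ih _ (hlt y hy)
      refine ⟨F ∪ G, ?_, fun z => ?_⟩
      · intro C hC
        rcases Finset.mem_union.1 hC with hC | hC
        · exact hF1 C hC
        · exact hG1 C hC
      · constructor
        · intro hz
          by_cases h1 : x ≤ z
          · have h2 : ¬ y ≤ z := fun h2 => hxy ⟨z, hz, h1, h2⟩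
            obtain ⟨C, hC, hzC⟩ := (hG2 z).1 ⟨hz, h2⟩
            exact ⟨C, Finset.mem_union_right _ hC, hzC⟩
          · obtain ⟨C, hC, hzC⟩ := (hF2 z).1 ⟨hz, h1⟩
            exact ⟨C, Finset.mem_union_left _ hC, hzC⟩
        · rintro ⟨C, hC, hzC⟩
          rcases Finset.mem_union.1 hC with hC | hC
          · exact ((hF2 z).2 ⟨C, hC, hzC⟩).1
          · exact ((hG2 z).2 ⟨C, hC, hzC⟩).1
  · refine ⟨∅, by simp, fun x => ?_⟩
    simp only [Finset.notMem_empty, false_and, exists_false, iff_false]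
    exact fun hx => hne ⟨x, hx⟩

/-- An ideal covered by finitely many lower sets lies in one of them. -/
theorem ideal_sub_one {Z : Type*} {S : Set Y} (hS : IsIdeal S) (F : Finset Z) (L : Z → Set Y)
    (hL : ∀ C ∈ F, IsLowerSet (L C)) (hc : ∀ x ∈ S, ∃ C ∈ F, x ∈ L C) :
    ∃ C ∈ F, S ⊆ L C := by
  classical
  by_contra hcon
  push Not at hcon
  have key : ∀ G : Finset Z, G ⊆ F → ∃ x ∈ S, ∀ C ∈ G, x ∉ L C := by
    intro G
    induction G using Finset.induction_on with
    | empty => intro _; obtain ⟨x, hx⟩ := hS.1; exact ⟨x, hx, by simp⟩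
    | insert C G _ ih =>
      intro hG
      obtain ⟨x, hx, hxG⟩ := ih fun a ha => hG (Finset.mem_insert_of_mem ha)
      have hCF : C ∈ F := hG (Finset.mem_insert_self _ _)
      obtain ⟨y, hy, hyC⟩ := Set.not_subset.1 (hcon C hCF)
      obtain ⟨z, hz, hxz, hyz⟩ := hS.2.2 x hx y hy
      refine ⟨z, hz, fun B hB hzB => ?_⟩
      rcases Finset.mem_insert.1 hB with rfl | hB'
      · exact hyC (hL _ hCF hyz hzB)
      · exact hxG B hB' (hL _ (hG hB) hxz hzB)
  obtain ⟨x, hx, hxF⟩ := key F subset_rfl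
  obtain ⟨C, hC, hxC⟩ := hc x hx
  exact hxF C hC hxC

end GenericWqo

section Words

/-- Words, as a type synonym of lists carrying the embedding quasi-ordering. -/
def EWord (X : Type*) := List X

variable {X : Type*} [Preorder X]

theorem wordEmb_iff {u v : List X} :
    WordEmb (· ≤ ·) u v ↔ List.SublistForall₂ (· ≤ ·) u v := by
  constructor
  · intro h
    induction h with
    | nil => exact .nil
    | cons h _ ih => exact .cons h ih
    | skip _ ih => exact .cons_right ih
  · intro h
    induction h with
    | nil => exact .nil _
    | cons h _ ih => exact .cons h ih
    | cons_right _ ih => exact .skip ih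

instance : Preorder (EWord X) where
  le u v := WordEmb (α := X) (β := X) (· ≤ ·) u v
  le_refl u := wordEmb_iff.2 (refl_of (List.SublistForall₂ (α := X) (· ≤ ·)) u)
  le_trans u v w h1 h2 := wordEmb_iff.2
    (trans_of (List.SublistForall₂ (α := X) (· ≤ ·)) (wordEmb_iff.1 h1) (wordEmb_iff.1 h2))

theorem eword_wqo (h : IsWqo X) : WellQuasiOrdered (fun a b : EWord X => a ≤ b) := by
  have h1 : (Set.univ : Set X).PartiallyWellOrderedOn (fun a b => a ≤ b) := by
    intro f
    obtain ⟨g, hg, hm⟩ := h (fun n => (f n).1)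
    exact ⟨g 0, g 1, hg Nat.zero_lt_one, hm 0 1 (Nat.zero_le _)⟩
  intro f
  obtain ⟨m, n, hmn, hl⟩ := h1.partiallyWellOrderedOn_sublistForall₂ (fun a b => a ≤ b)
    (fun n => ⟨(f n : List X), fun _ _ => Set.mem_univ _⟩)
  exact ⟨m, n, hmn, wordEmb_iff.2 hl⟩

theorem wqo_prod (h : IsWqo X) : WellQuasiOrdered (fun a b : EWord X × EWord X => a ≤ b) :=
  (eword_wqo h).prod (eword_wqo h)

theorem emb_append {u v u' v' : List X} (h1 : WordEmb (· ≤ ·) u u') (h2 : WordEmb (· ≤ ·) v v') :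
    WordEmb (· ≤ ·) (u ++ v) (u' ++ v') := by
  induction h1 with
  | nil l =>
    induction l with
    | nil => exact h2
    | cons b l ih => exact .skip ih
  | cons h _ ih => exact .cons h ih
  | skip _ ih => exact .skip ih

theorem emb_refl (u : List X) : WordEmb (· ≤ ·) u u := le_refl (α := EWord X) u

theorem emb_left (u v : List X) : WordEmb (· ≤ ·) u (u ++ v) := by
  simpa using emb_append (emb_refl u) (.nil v)

theorem emb_right (u v : List X) : WordEmb (· ≤ ·) v (u ++ v) := by
  simpa using emb_append (.nil u) (emb_refl v)

theorem emb_split {w u v : List X} (h : WordEmb (· ≤ ·) w (u ++ v)) :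
    ∃ w1 w2, w = w1 ++ w2 ∧ WordEmb (· ≤ ·) w1 u ∧ WordEmb (· ≤ ·) w2 v := by
  induction u generalizing w with
  | nil => exact ⟨[], w, rfl, .nil _, h⟩
  | cons a u ih =>
    cases h with
    | nil => exact ⟨[], [], rfl, .nil _, .nil _⟩
    | cons hab h =>
      obtain ⟨w1, w2, rfl, h1, h2⟩ := ih h
      exact ⟨_ :: w1, w2, rfl, .cons hab h1, h2⟩
    | skip h =>
      obtain ⟨w1, w2, rfl, h1, h2⟩ := ih h
      exact ⟨w1, w2, rfl, .skip h1, h2⟩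

theorem emb_mem {u v : List X} (h : WordEmb (· ≤ ·) u v) : ∀ x ∈ u, ∃ y ∈ v, x ≤ y := by
  induction h with
  | nil => simp
  | cons h _ ih =>
    intro x hx
    rcases List.mem_cons.1 hx with rfl | hx
    · exact ⟨_, List.mem_cons_self, h⟩
    · obtain ⟨y, hy, hxy⟩ := ih x hx
      exact ⟨y, List.mem_cons_of_mem _ hy, hxy⟩
  | skip _ ih =>
    intro x hx
    obtain ⟨y, hy, hxy⟩ := ih x hx
    exact ⟨y, List.mem_cons_of_mem _ hy, hxy⟩

theorem emb_length {u v : List X} (h : WordEmb (· ≤ ·) u v) : u.length ≤ v.length := by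
  induction h with
  | nil => simp
  | cons h _ ih => simpa using ih
  | skip _ ih => simp; omega

/-- Concatenation of languages. -/
def catL (A B : Set (List X)) : Set (List X) := {w | ∃ u ∈ A, ∃ v ∈ B, w = u ++ v}

/-- Ideals of words, unfolded. -/
def WIdeal (S : Set (List X)) : Prop :=
  S.Nonempty ∧ (∀ u v : List X, WordEmb (· ≤ ·) u v → v ∈ S → u ∈ S) ∧
      ∀ u ∈ S, ∀ v ∈ S, ∃ w ∈ S, WordEmb (· ≤ ·) u w ∧ WordEmb (· ≤ ·) v w

theorem WIdeal.toIdeal {S : Set (List X)} (h : WIdeal S) : IsIdeal (X := EWord X) S :=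
  ⟨h.1, fun a b hba ha => h.2.1 b a hba ha, h.2.2⟩

theorem WIdeal.nil_mem {S : Set (List X)} (h : WIdeal S) : [] ∈ S := by
  obtain ⟨w, hw⟩ := h.1
  exact h.2.1 _ _ (.nil w) hw

theorem WIdeal.cat {A B : Set (List X)} (hA : WIdeal A) (hB : WIdeal B) : WIdeal (catL A B) := by
  refine ⟨⟨[], [], hA.nil_mem, [], hB.nil_mem, rfl⟩, ?_, ?_⟩
  · rintro w _ hw ⟨u, hu, v, hv, rfl⟩
    obtain ⟨w1, w2, rfl, h1, h2⟩ := emb_split hw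
    exact ⟨w1, hA.2.1 _ _ h1 hu, w2, hB.2.1 _ _ h2 hv, rfl⟩
  · rintro _ ⟨u, hu, v, hv, rfl⟩ _ ⟨u', hu', v', hv', rfl⟩
    obtain ⟨a, ha, h1, h2⟩ := hA.2.2 u hu u' hu'
    obtain ⟨b, hb, h3, h4⟩ := hB.2.2 v hv v' hv'
    exact ⟨a ++ b, ⟨a, ha, b, hb, rfl⟩, emb_append h1 h3, emb_append h2 h4⟩

theorem wideal_singleton : WIdeal ({[]} : Set (List X)) := by
  refine ⟨⟨[], rfl⟩, ?_, ?_⟩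
  · rintro u v h rfl
    cases h; rfl
  · rintro u rfl v rfl
    exact ⟨[], rfl, .nil _, .nil _⟩

theorem wideal_atom {e : WAtom X} (he : WValidAtom e) : WIdeal e.den := by
  cases e with
  | opt C =>
    obtain ⟨hne, hlow, hdir⟩ := he
    refine ⟨⟨[], Or.inl rfl⟩, ?_, ?_⟩
    · rintro u v h (hv | ⟨x, hx, rfl⟩)
      · rw [Set.mem_singleton_iff] at hv
        subst hv
        cases h; exact Or.inl rfl
      · cases h with
        | nil => exact Or.inl rfl
        | cons hab h => cases h; exact Or.inr ⟨_, hlow hab hx, rfl⟩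
        | skip h => cases h; exact Or.inl rfl
    · rintro u (hu | ⟨x, hx, rfl⟩) v hv
      · rw [Set.mem_singleton_iff] at hu
        subst hu
        exact ⟨v, hv, .nil _, emb_refl v⟩
      · rcases hv with hv | ⟨y, hy, rfl⟩
        · rw [Set.mem_singleton_iff] at hv
          subst hv
          exact ⟨[x], Or.inr ⟨x, hx, rfl⟩, emb_refl _, .nil _⟩
        · obtain ⟨z, hz, h1, h2⟩ := hdir x hx y hy
          exact ⟨[z], Or.inr ⟨z, hz, rfl⟩, .cons h1 (.nil _), .cons h2 (.nil _)⟩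
  | star A =>
    obtain ⟨hne, hA⟩ := he
    refine ⟨⟨[], by simp [WAtom.den]⟩, ?_, ?_⟩
    · intro u v h hv x hx
      obtain ⟨y, hy, hxy⟩ := emb_mem h x hx
      obtain ⟨C, hC, hyC⟩ := hv y hy
      exact ⟨C, hC, (hA C hC).2.1 hxy hyC⟩
    · intro u hu v hv
      refine ⟨u ++ v, ?_, emb_left u v, emb_right u v⟩
      intro x hx
      rcases List.mem_append.1 hx with hx | hx
      · exact hu x hx
      · exact hv x hx

theorem wideal_prod (P : List (WAtom X)) (hP : ∀ e ∈ P, WValidAtom e) : WIdeal (wprodDen P) := by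
  induction P with
  | nil => exact wideal_singleton
  | cons e P ih =>
    exact (wideal_atom (hP e List.mem_cons_self)).cat
      (ih fun a ha => hP a (List.mem_cons_of_mem _ ha))

/-- An ideal included in a concatenation of lower sets splits. -/
theorem ideal_split (hw : IsWqo X) {S A B : Set (List X)} (hS : WIdeal S)
    (hA : ∀ u v : List X, WordEmb (· ≤ ·) u v → v ∈ A → u ∈ A)
    (hB : ∀ u v : List X, WordEmb (· ≤ ·) u v → v ∈ B → u ∈ B)
    (hsub : S ⊆ catL A B) :
    ∃ I J, WIdeal I ∧ WIdeal J ∧ I ⊆ A ∧ J ⊆ B ∧ S = catL I J := by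
  let T : LowerSet (EWord X × EWord X) :=
    ⟨{p | p.1 ∈ A ∧ p.2 ∈ B ∧ (List.append p.1 p.2 : List X) ∈ S}, by
      rintro ⟨u, v⟩ ⟨u', v'⟩ ⟨h1, h2⟩ ⟨ha, hb, hs⟩
      exact ⟨hA _ _ h1 ha, hB _ _ h2 hb, hS.2.1 _ _ (emb_append h1 h2) hs⟩⟩
  obtain ⟨F, hF, hT⟩ := lower_finite_union (wqo_prod hw) T
  let p1 : Set (EWord X × EWord X) → Set (List X) := fun C => {u | ∃ v, (u, v) ∈ C}
  let p2 : Set (EWord X × EWord X) → Set (List X) := fun C => {v | ∃ u, (u, v) ∈ C}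
  have hp1 : ∀ C ∈ F, WIdeal (p1 C) := fun C hC => by
    obtain ⟨⟨⟨a, b⟩, hab⟩, hl, hd⟩ := hF C hC
    refine ⟨⟨a, b, hab⟩, ?_, ?_⟩
    · rintro u v huv ⟨w, hw⟩
      exact ⟨w, hl (show ((u, w) : EWord X × EWord X) ≤ (v, w) from ⟨huv, le_rfl⟩) hw⟩
    · rintro u ⟨u', hu⟩ v ⟨v', hv⟩
      obtain ⟨⟨w, w'⟩, hw, h1, h2⟩ := hd _ hu _ hv
      exact ⟨w, ⟨w', hw⟩, h1.1, h2.1⟩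
  have hp2 : ∀ C ∈ F, WIdeal (p2 C) := fun C hC => by
    obtain ⟨⟨⟨a, b⟩, hab⟩, hl, hd⟩ := hF C hC
    refine ⟨⟨b, a, hab⟩, ?_, ?_⟩
    · rintro u v huv ⟨w, hw⟩
      exact ⟨w, hl (show ((w, u) : EWord X × EWord X) ≤ (w, v) from ⟨le_rfl, huv⟩) hw⟩
    · rintro u ⟨u', hu⟩ v ⟨v', hv⟩
      obtain ⟨⟨w', w⟩, hw, h1, h2⟩ := hd _ hu _ hv
      exact ⟨w, ⟨w', hw⟩, h1.2, h2.2⟩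
  obtain ⟨C, hC, hSC⟩ := ideal_sub_one hS.toIdeal F (fun C => (catL (p1 C) (p2 C) : Set (List X)))
    (fun C hC => ((hp1 C hC).cat (hp2 C hC)).toIdeal.2.1) (by
      intro x hx
      obtain ⟨u, hu, v, hv, rfl⟩ := hsub hx
      obtain ⟨C, hC, h⟩ := (hT (u, v)).1 ⟨hu, hv, hx⟩
      exact ⟨C, hC, u, ⟨v, h⟩, v, ⟨u, h⟩, rfl⟩)
  refine ⟨p1 C, p2 C, hp1 C hC, hp2 C hC, ?_, ?_, Set.Subset.antisymm hSC ?_⟩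
  · rintro u ⟨v, h⟩
    exact ((hT _).2 ⟨C, hC, h⟩).1
  · rintro v ⟨u, h⟩
    exact ((hT _).2 ⟨C, hC, h⟩).2.1
  · rintro _ ⟨u, ⟨v', hu⟩, v, ⟨u', hv⟩, rfl⟩
    obtain ⟨⟨a, b⟩, hab, h1, h2⟩ := (hF C hC).2.2 _ hu _ hv
    have := ((hT _).2 ⟨C, hC, hab⟩).2.2
    exact hS.2.1 _ _ (emb_append h1.1 h2.2) this

/-- Being the denotation of a product. -/
def IsProd (S : Set (List X)) : Prop :=
  ∃ P : List (WAtom X), (∀ e ∈ P, WValidAtom e) ∧ S = wprodDen P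

theorem wprodDen_append (P Q : List (WAtom X)) :
    wprodDen (P ++ Q) = catL (wprodDen P) (wprodDen Q) := by
  induction P with
  | nil => ext w; simp [wprodDen, catL]
  | cons e P ih =>
    ext w
    simp only [List.cons_append, wprodDen, ih, catL, Set.mem_ofPred_eq]
    constructor
    · rintro ⟨u, hu, _, ⟨v, hv, z, hz, rfl⟩, rfl⟩
      exact ⟨u ++ v, ⟨u, hu, v, hv, rfl⟩, z, hz, by simp⟩
    · rintro ⟨_, ⟨u, hu, v, hv, rfl⟩, z, hz, rfl⟩
      exact ⟨u, hu, v ++ z, ⟨v, hv, z, hz, rfl⟩, by simp⟩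

theorem IsProd.cat {A B : Set (List X)} (hA : IsProd A) (hB : IsProd B) : IsProd (catL A B) := by
  obtain ⟨P, hP, rfl⟩ := hA
  obtain ⟨Q, hQ, rfl⟩ := hB
  refine ⟨P ++ Q, fun e he => ?_, (wprodDen_append P Q).symm⟩
  rcases List.mem_append.1 he with he | he
  · exact hP e he
  · exact hQ e he

theorem isProd_nil : IsProd ({[]} : Set (List X)) := ⟨[], by simp, rfl⟩

theorem isProd_atom {e : WAtom X} (he : WValidAtom e) : IsProd e.den :=
  ⟨[e], by simpa using he, by ext w; simp [wprodDen]⟩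

theorem isProd_short {J : Set (List X)} (hJ : WIdeal J) (hs : ∀ w ∈ J, w.length ≤ 1) :
    IsProd J := by
  by_cases hne : ∃ x, [x] ∈ J
  · have hC : WValidAtom (.opt {x | [x] ∈ J}) := by
      refine ⟨hne, fun a b hba ha => hJ.2.1 _ _ (.cons hba (.nil _)) ha, ?_⟩
      intro x hx y hy
      obtain ⟨w, hw, h1, h2⟩ := hJ.2.2 _ hx _ hy
      have hl := hs w hw
      match w, hw, h1, h2, hl with
      | [], _, h1, _, _ => cases h1
      | [c], hw, h1, h2, _ =>
        obtain ⟨a, ha, hxa⟩ := emb_mem h1 x (by simp)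
        obtain ⟨b, hb, hyb⟩ := emb_mem h2 y (by simp)
        rw [List.mem_singleton] at ha hb
        subst ha; subst hb
        exact ⟨_, hw, hxa, hyb⟩
      | _ :: _ :: _, _, _, _, hl => simp at hl
    have : J = WAtom.den (.opt {x | [x] ∈ J}) := by
      ext w
      constructor
      · intro hw
        have hl := hs w hw
        match w, hw, hl with
        | [], _, _ => exact Or.inl rfl
        | [c], hw, _ => exact Or.inr ⟨c, hw, rfl⟩
        | _ :: _ :: _, _, hl => simp at hl
      · rintro (hw | ⟨x, hx, rfl⟩)
        · rw [Set.mem_singleton_iff] at hw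
          subst hw
          exact hJ.nil_mem
        · exact hx
    rw [this]
    exact isProd_atom hC
  · have : J = {[]} := by
      ext w
      constructor
      · intro hw
        have hl := hs w hw
        match w, hw, hl with
        | [], _, _ => rfl
        | [c], hw, _ => exact (hne ⟨c, hw⟩).elim
        | _ :: _ :: _, _, hl => simp at hl
      · intro hw
        rw [Set.mem_singleton_iff] at hw
        subst hw
        exact hJ.nil_mem
    rw [this]
    exact isProd_nil

theorem isProd_full (hw : IsWqo X) {S : Set (List X)} (hS : WIdeal S)
    (hfull : ∀ w : List X, (∀ x ∈ w, [x] ∈ S) → w ∈ S) : IsProd S := by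
  have hX : WellQuasiOrdered (fun a b : X => a ≤ b) := fun f => by
    obtain ⟨g, hg, hm⟩ := hw f
    exact ⟨g 0, g 1, hg Nat.zero_lt_one, hm 0 1 (Nat.zero_le _)⟩
  obtain ⟨F, hF, hFA⟩ := lower_finite_union hX
    ⟨{x | [x] ∈ S}, fun a b hba ha => hS.2.1 _ _ (.cons hba (.nil _)) ha⟩
  have hlet : ∀ w ∈ S, ∀ x ∈ w, [x] ∈ S := by
    intro w hw x hx
    obtain ⟨s, t, rfl⟩ := List.append_of_mem hx
    exact hS.2.1 _ _ (by simpa using emb_append (.nil s) (.cons le_rfl (.nil t))) hw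
  have hSF : S = WAtom.den (.star F) := by
    ext w
    constructor
    · intro hw x hx
      exact (hFA x).1 (hlet w hw x hx)
    · intro hw
      exact hfull w fun x hx => (hFA x).2 (hw x hx)
  by_cases hne : F.Nonempty
  · rw [hSF]
    exact isProd_atom ⟨hne, hF⟩
  · have : S = {[]} := by
      rw [Finset.not_nonempty_iff_eq_empty] at hne
      subst hne
      rw [hSF]
      ext w
      constructor
      · intro hw
        cases w with
        | nil => rfl
        | cons a w =>
          obtain ⟨C, hC, _⟩ := hw a List.mem_cons_self
          simp at hC
      · intro hw x hx
        rw [Set.mem_singleton_iff] at hw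
        subst hw
        simp at hx
    rw [this]
    exact isProd_nil

/-- A word not above `a :: w`. -/
theorem not_emb_cons {a : X} {w v : List X} (h : ¬ WordEmb (· ≤ ·) (a :: w) v) :
    ∃ p x q, v = p ++ (x ++ q) ∧ ¬ WordEmb (· ≤ ·) [a] p ∧ x.length ≤ 1 ∧
      ¬ WordEmb (· ≤ ·) w q ∨ (v = p ∧ ¬ WordEmb (· ≤ ·) [a] p) := by
  induction v with
  | nil => exact ⟨[], [], [], Or.inr ⟨rfl, fun h => by cases h⟩⟩
  | cons b v ih =>
    by_cases hab : a ≤ b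
    · refine ⟨[], [b], v, Or.inl ⟨rfl, fun h => by (cases h), by simp, fun hq => h (.cons hab hq)⟩⟩
    · have key : ∀ p, ¬ WordEmb (· ≤ ·) [a] p → ¬ WordEmb (· ≤ ·) [a] (b :: p) := by
        intro p hp hbp
        cases hbp with
        | cons h _ => exact hab h
        | skip h => exact hp h
      obtain ⟨p, x, q, h | h⟩ := ih fun hv => h (.skip hv)
      · obtain ⟨rfl, h1, h2, h3⟩ := h
        exact ⟨b :: p, x, q, Or.inl ⟨rfl, key p h1, h2, h3⟩⟩
      · obtain ⟨rfl, h1⟩ := h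
        exact ⟨b :: v, x, q, Or.inr ⟨rfl, key v h1⟩⟩

theorem ideal_isProd (hw : IsWqo X) (S : LowerSet (EWord X)) (R : Set (List X))
    (hSR : S.carrier = R) (hS : WIdeal R) : IsProd R := by
  induction S using (lowerSet_wf (eword_wqo hw)).induction generalizing R with
  | _ S ih =>
  have ih' : ∀ I : Set (List X), WIdeal I → I ⊆ R →
      ∀ w : List X, w ∈ R → w ∉ I → IsProd I := by
    intro I hI hIS w hwS hwI
    refine ih ⟨I, hI.toIdeal.2.1⟩ (lt_of_le_of_ne ?_ fun he => hwI ?_) I rfl hI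
    · intro u hu
      have : u ∈ S.carrier := by rw [hSR]; exact hIS hu
      exact this
    · have h2 : S.carrier = I := congrArg (fun L : LowerSet (EWord X) => L.carrier) he.symm
      rw [← h2, hSR]
      exact hwS
  by_cases hfull : ∀ w : List X, (∀ x ∈ w, [x] ∈ R) → w ∈ R
  · exact isProd_full hw hS hfull
  have hex : ∃ n, ∃ w : List X, w.length = n ∧ (∀ x ∈ w, [x] ∈ R) ∧ w ∉ R := by
    push Not at hfull
    obtain ⟨w, h1, h2⟩ := hfull
    exact ⟨_, w, rfl, h1, h2⟩
  classical
  obtain ⟨w, hwl, hwx, hwR⟩ := Nat.find_spec hex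
  have hmin := fun m => Nat.find_min hex (m := m)
  cases w with
  | nil => exact (hwR hS.nil_mem).elim
  | cons a w =>
  have haR : [a] ∈ R := hwx a (by simp)
  have hwR' : w ∈ R := by
    by_contra hcon
    refine hmin w.length (by rw [← hwl]; simp) ⟨w, rfl, fun x hx => hwx x (by simp [hx]), hcon⟩
  have hlowN : ∀ z : List X, ∀ u v : List X, WordEmb (· ≤ ·) u v →
      v ∈ {v : List X | ¬ WordEmb (· ≤ ·) z v} → u ∈ {v : List X | ¬ WordEmb (· ≤ ·) z v} :=
    fun z u v huv hv hu => hv (le_trans (α := EWord X) hu huv)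
  have hlow1 : ∀ u v : List X, WordEmb (· ≤ ·) u v →
      v ∈ {v : List X | v.length ≤ 1} → u ∈ {v : List X | v.length ≤ 1} :=
    fun u v huv hv => (emb_length huv).trans hv
  have hlowC : ∀ u v : List X, WordEmb (· ≤ ·) u v →
      v ∈ insert [] (catL {v : List X | v.length ≤ 1} {v : List X | ¬ WordEmb (· ≤ ·) w v}) →
      u ∈ insert [] (catL {v : List X | v.length ≤ 1} {v : List X | ¬ WordEmb (· ≤ ·) w v}) := by
    rintro u v huv (rfl | ⟨x, hx, q, hq, rfl⟩)
    · cases huv; exact Or.inl rfl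
    · obtain ⟨w1, w2, rfl, h1, h2⟩ := emb_split huv
      exact Or.inr ⟨w1, hlow1 _ _ h1 hx, w2, hlowN _ _ _ h2 hq, rfl⟩
  obtain ⟨I, J, hI, hJ, hIA, hJB, hIJ⟩ := ideal_split hw hS (hlowN [a]) hlowC (by
    intro v hv
    obtain ⟨p, x, q, h | h⟩ := not_emb_cons (a := a) (w := w) (v := v)
      (fun h => hwR (hS.2.1 _ _ h hv))
    · obtain ⟨rfl, h1, h2, h3⟩ := h
      exact ⟨p, h1, x ++ q, Or.inr ⟨x, h2, q, h3, rfl⟩, rfl⟩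
    · obtain ⟨rfl, h1⟩ := h
      exact ⟨v, h1, [], Or.inl rfl, by simp⟩)
  have hIR : I ⊆ R := by
    rw [hIJ]; intro u hu; exact ⟨u, hu, [], hJ.nil_mem, by simp⟩
  have hJR : J ⊆ R := by
    rw [hIJ]; intro u hu; exact ⟨[], hI.nil_mem, u, hu, by simp⟩
  have hIP : IsProd I := ih' I hI hIR [a] haR fun h => hIA h (emb_refl _)
  rw [hIJ]
  refine hIP.cat ?_
  by_cases hJ0 : J ⊆ {[]}
  · have : J = {[]} := Set.Subset.antisymm hJ0 (by simpa using hJ.nil_mem)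
    rw [this]; exact isProd_nil
  obtain ⟨z, hzJ, hz0⟩ := Set.not_subset.1 hJ0
  have hJsub : J ⊆ catL {v : List X | v.length ≤ 1} {v : List X | ¬ WordEmb (· ≤ ·) w v} := by
    intro v hv
    rcases hJB hv with rfl | h
    · rcases hJB hzJ with rfl | ⟨x, hx, q, hq, rfl⟩
      · exact (hz0 rfl).elim
      · exact ⟨[], by simp, [], hlowN _ _ _ (.nil q) hq, rfl⟩
    · exact h
  obtain ⟨K, L, hK, hL, hK1, hLw, hKL⟩ := ideal_split hw hJ hlow1 (hlowN w) hJsub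
  have hLJ : L ⊆ J := by
    rw [hKL]; intro u hu; exact ⟨[], hK.nil_mem, u, hu, by simp⟩
  rw [hKL]
  exact (isProd_short hK fun v hv => hK1 hv).cat
    (ih' L hL (hLJ.trans hJR) w hwR' fun h => hLw h (emb_refl _))

end Words

/-- For a well quasi-ordered set `X`, the ideals of `(X*, ≤*)` — equivalently, the
irreducible closed subsets of `X*` in the Alexandroff topology of `≤*` — are exactly the
denotations of products over `X`. -/
theorem stmt12 {X : Type*} [Preorder X] (hwqo : IsWqo X) (S : Set (List X)) :
    (S.Nonempty ∧ (∀ u v : List X, WordEmb (· ≤ ·) u v → v ∈ S → u ∈ S) ∧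
      ∀ u ∈ S, ∀ v ∈ S, ∃ w ∈ S, WordEmb (· ≤ ·) u w ∧ WordEmb (· ≤ ·) v w) ↔
    ∃ P : List (WAtom X), (∀ e ∈ P, WValidAtom e) ∧ S = wprodDen P := by
  constructor
  · intro h
    exact ideal_isProd hwqo ⟨S, (WIdeal.toIdeal h).2.1⟩ S rfl h
  · rintro ⟨P, hP, rfl⟩
    exact wideal_prod P hP
end

section
/- Let (X,≤) be a well quasi-ordered set and let X^⊛ be the set of finite multisets over X, quasi-ordered by ≤⊛. The ideals of (X^⊛, ≤⊛) (equivalently, the irreducible closed subsets of X^⊛ with the Alexandroff topology of ≤⊛) are exactly the denotations of ⊛-products over X. -/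
/-- The quasi-ordering `≤⊛` on finite multisets: `⦃x₁,…,x_m⦄ ≤⊛ ⦃y₁,…,y_n⦄` iff there is an
injection `r` with `xᵢ ≤ y_{r(i)}` for all `i`, i.e. some sub-multiset of the right-hand
side is related pointwise to the left-hand side. -/
def MSLE {X : Type*} [Preorder X] (m m' : Multiset X) : Prop :=
  ∃ t ≤ m', Multiset.Rel (· ≤ ·) m t

/-- `A ⊙ B = {m ⊎ m' | m ∈ A, m' ∈ B}`. -/
def odot {X : Type*} (A B : Set (Multiset X)) : Set (Multiset X) :=
  {m | ∃ a ∈ A, ∃ b ∈ B, m = a + b}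

/-- `(⋃ A)^⊛`: the multisets all of whose elements lie in some member of `A`. -/
def starDen {X : Type*} (A : Finset (Set X)) : Set (Multiset X) :=
  {m | ∀ x ∈ m, ∃ C ∈ A, x ∈ C}

/-- `C^?`: the empty multiset together with the singletons `⦃x⦄`, `x ∈ C`. -/
def optDen {X : Type*} (C : Set X) : Set (Multiset X) :=
  {0} ∪ {m | ∃ x ∈ C, m = {x}}

/-- Denotation of the ⊛-product `A^⊛ ⊙ C₁^? ⊙ … ⊙ Cₙ^?`. -/
def msProdDen {X : Type*} (A : Finset (Set X)) (Cs : List (Set X)) : Set (Multiset X) :=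
  (Cs.map optDen).foldl odot (starDen A)

section Helpers
open Multiset
open scoped Classical

variable {X : Type*} [Preorder X]

theorem IsWqo.inst (h : IsWqo X) : WellQuasiOrderedLE X := by
  refine ⟨fun f => ?_⟩
  obtain ⟨g, hg, hm⟩ := h f
  exact ⟨g 0, g 1, hg Nat.zero_lt_one, hm 0 1 (Nat.zero_le 1)⟩

theorem wf_lowerSet [WellQuasiOrderedLE X] : WellFoundedLT (LowerSet X) := by
  rw [WellFoundedLT, isWellFounded_iff, RelEmbedding.wellFounded_iff_isEmpty]
  refine ⟨fun f => ?_⟩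
  have hlt : ∀ m n, m < n → f n < f m := fun m n h => f.map_rel_iff.2 h
  have : ∀ n, ∃ x, x ∈ f n ∧ x ∉ f (n+1) := fun n => by
    have h := hlt n (n+1) (Nat.lt_succ_self n)
    exact Set.exists_of_ssubset (LowerSet.coe_ssubset_coe.2 h)
  choose x hx hx' using this
  obtain ⟨m, n, hmn, hle⟩ := wellQuasiOrdered_le x
  apply hx' m
  have h1 : f n ≤ f (m+1) := by
    rcases Nat.lt_or_ge (m+1) n with h | h
    · exact (hlt _ _ h).le
    · have : n = m+1 := by omega
      rw [this]
  exact (f (m+1)).lower hle (h1 (hx n))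

theorem lowerSet_finite_ideals [WellQuasiOrderedLE X] (D : LowerSet X) :
    ∃ A : Finset (Set X), (∀ C ∈ A, IsIdeal C) ∧ ∀ x, x ∈ D ↔ ∃ C ∈ A, x ∈ C := by
  have := wf_lowerSet (X := X)
  induction D using WellFoundedLT.induction with
  | ind D ih =>
    by_cases hne : (D : Set X).Nonempty
    swap
    · refine ⟨∅, by simp, fun x => ?_⟩
      simp only [Finset.notMem_empty, false_and, exists_false, iff_false]
      exact fun hx => hne ⟨x, hx⟩
    by_cases hd : DirectedOn (· ≤ ·) (D : Set X)
    · exact ⟨{(D : Set X)}, by simpa using ⟨hne, D.lower, hd⟩, by simp⟩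
    · simp only [DirectedOn, not_forall, not_exists, not_and] at hd
      obtain ⟨u, hu, v, hv, huv⟩ := hd
      have key : ∀ u ∈ D, ∃ A : Finset (Set X), (∀ C ∈ A, IsIdeal C) ∧
          ∀ x, (x ∈ D ∧ ¬ u ≤ x) ↔ ∃ C ∈ A, x ∈ C := by
        intro u hu
        let E : LowerSet X := ⟨{x | x ∈ D ∧ ¬ u ≤ x}, fun a b hba ha =>
          ⟨D.lower hba ha.1, fun h => ha.2 (h.trans hba)⟩⟩
        have hE : E < D := by
          refine lt_of_le_not_ge (fun x hx => hx.1) (fun h => ?_)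
          exact (h hu).2 le_rfl
        obtain ⟨A, hA, hA'⟩ := ih E hE
        exact ⟨A, hA, fun x => hA' x⟩
      obtain ⟨A, hA, hA'⟩ := key u hu
      obtain ⟨B, hB, hB'⟩ := key v hv
      refine ⟨A ∪ B, ?_, fun x => ?_⟩
      · intro C hC
        rcases Finset.mem_union.1 hC with h | h
        exacts [hA C h, hB C h]
      · constructor
        · intro hx
          by_cases hux : u ≤ x
          · obtain ⟨C, hC, hxC⟩ := (hB' x).1 ⟨hx, huv x hx hux⟩
            exact ⟨C, Finset.mem_union_right _ hC, hxC⟩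
          · obtain ⟨C, hC, hxC⟩ := (hA' x).1 ⟨hx, hux⟩
            exact ⟨C, Finset.mem_union_left _ hC, hxC⟩
        · rintro ⟨C, hC, hxC⟩
          rcases Finset.mem_union.1 hC with h | h
          exacts [((hA' x).2 ⟨C, h, hxC⟩).1, ((hB' x).2 ⟨C, h, hxC⟩).1]

theorem finite_basis [WellQuasiOrderedLE X] (P : X → Prop) :
    ∃ F : Finset X, (∀ b ∈ F, P b) ∧ ∀ x, P x → ∃ b ∈ F, b ≤ x := by
  by_contra hcon
  push Not at hcon
  obtain ⟨f, -, hf⟩ := exists_seq_of_forall_finset_exists P (fun a b => ¬ a ≤ b) hcon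
  obtain ⟨m, n, hmn, hle⟩ := wellQuasiOrdered_le f
  exact hf m n hmn hle

theorem ideal_pi {N : ℕ} {I : Set (Fin N → X)} (hI : IsIdeal I) (f : Fin N → X)
    (hf : ∀ i, ∃ g ∈ I, g i = f i) : f ∈ I := by
  obtain ⟨hne, hlow, hdir⟩ := hI
  have : ∀ s : Finset (Fin N), ∃ g ∈ I, ∀ i ∈ s, f i ≤ g i := by
    intro s
    induction s using Finset.induction_on with
    | empty => exact ⟨hne.some, hne.some_mem, by simp⟩
    | insert a s _ ih =>
      obtain ⟨g, hg, hgs⟩ := ih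
      obtain ⟨g', hg', hga⟩ := hf a
      obtain ⟨w, hw, h1, h2⟩ := hdir g hg g' hg'
      refine ⟨w, hw, fun i hi => ?_⟩
      rcases Finset.mem_insert.1 hi with rfl | h
      · rw [← hga]; exact h2 i
      · exact (hgs i h).trans (h1 i)
  obtain ⟨g, hg, h⟩ := this Finset.univ
  exact hlow (fun i => h i (Finset.mem_univ i)) hg

/-! Multiset order -/

theorem msle_zero (v : Multiset X) : MSLE 0 v := ⟨0, Multiset.zero_le _, by simp⟩

theorem msle_cons {x : X} {u v : Multiset X} :
    MSLE (x ::ₘ u) v ↔ ∃ y v', x ≤ y ∧ MSLE u v' ∧ v = y ::ₘ v' := by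
  constructor
  · rintro ⟨t, ht, hr⟩
    obtain ⟨y, t', hxy, hr', rfl⟩ := Multiset.rel_cons_left.1 hr
    obtain ⟨v', rfl⟩ := Multiset.exists_cons_of_mem (Multiset.mem_of_le ht (Multiset.mem_cons_self _ _))
    exact ⟨y, v', hxy, ⟨t', (Multiset.cons_le_cons_iff y).1 ht, hr'⟩, rfl⟩
  · rintro ⟨y, v', hxy, ⟨t, ht, hr⟩, rfl⟩
    exact ⟨y ::ₘ t, (Multiset.cons_le_cons_iff y).2 ht, hr.cons hxy⟩

theorem msle_refl (u : Multiset X) : MSLE u u := by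
  induction u using Multiset.induction_on with
  | empty => exact msle_zero _
  | cons a s ih => exact msle_cons.2 ⟨a, s, le_rfl, ih, rfl⟩

theorem msle_of_le {u v : Multiset X} (h : u ≤ v) : MSLE u v := by
  obtain ⟨t, -, hr⟩ := msle_refl u
  exact ⟨u, h, Multiset.rel_refl_of_refl_on fun x _ => le_rfl⟩

theorem msle_add {a b c d : Multiset X} (h : MSLE a c) (h' : MSLE b d) : MSLE (a+b) (c+d) := by
  obtain ⟨t, ht, hr⟩ := h
  obtain ⟨t', ht', hr'⟩ := h'
  exact ⟨t + t', add_le_add ht ht', hr.add hr'⟩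

theorem msle_card {u v : Multiset X} (h : MSLE u v) : card u ≤ card v := by
  obtain ⟨t, ht, hr⟩ := h
  rw [Multiset.card_eq_card_of_rel hr]
  exact Multiset.card_le_card ht

theorem msle_filter {P : X → Prop} [DecidablePred P] (hP : ∀ x y, x ≤ y → P x → P y) {u v : Multiset X}
    (h : MSLE u v) : MSLE (u.filter P) (v.filter P) := by
  induction u using Multiset.induction_on generalizing v with
  | empty => exact msle_zero _
  | cons a s ih =>
    obtain ⟨y, v', hay, hs, rfl⟩ := msle_cons.1 h
    by_cases ha : P a
    · rw [Multiset.filter_cons_of_pos _ ha, Multiset.filter_cons_of_pos _ (hP _ _ hay ha)]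
      exact msle_cons.2 ⟨y, _, hay, ih hs, rfl⟩
    · rw [Multiset.filter_cons_of_neg _ ha]
      obtain ⟨t, ht, hr⟩ := ih hs
      exact ⟨t, ht.trans (Multiset.filter_le_filter _ (Multiset.le_cons_self _ _)), hr⟩

theorem msle_trans {u v w : Multiset X} (h : MSLE u v) (h' : MSLE v w) : MSLE u w := by
  induction u using Multiset.induction_on generalizing v w with
  | empty => exact msle_zero _
  | cons a s ih =>
    obtain ⟨y, v', hay, hs, rfl⟩ := msle_cons.1 h
    obtain ⟨z, w', hyz, hv, rfl⟩ := msle_cons.1 h'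
    exact msle_cons.2 ⟨z, w', hay.trans hyz, ih hs hv, rfl⟩

theorem msle_add_split {u a b : Multiset X} (h : MSLE u (a+b)) :
    ∃ u₁ u₂, u = u₁ + u₂ ∧ MSLE u₁ a ∧ MSLE u₂ b := by
  induction u using Multiset.induction_on generalizing a b with
  | empty => exact ⟨0, 0, by simp, msle_zero _, msle_zero _⟩
  | cons x s ih =>
    obtain ⟨y, v', hxy, hs, he⟩ := msle_cons.1 h
    have hy : y ∈ a + b := he ▸ Multiset.mem_cons_self _ _
    rcases Multiset.mem_add.1 hy with hy | hy
    · obtain ⟨a', rfl⟩ := Multiset.exists_cons_of_mem hy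
      rw [Multiset.cons_add, Multiset.cons_inj_right] at he
      subst he
      obtain ⟨u₁, u₂, rfl, h1, h2⟩ := ih hs
      exact ⟨x ::ₘ u₁, u₂, by simp, msle_cons.2 ⟨y, a', hxy, h1, rfl⟩, h2⟩
    · obtain ⟨b', rfl⟩ := Multiset.exists_cons_of_mem hy
      rw [Multiset.add_cons, Multiset.cons_inj_right] at he
      subst he
      obtain ⟨u₁, u₂, rfl, h1, h2⟩ := ih hs
      exact ⟨u₁, x ::ₘ u₂, by simp, h1, msle_cons.2 ⟨y, b', hxy, h2, rfl⟩⟩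

theorem greedy {u b : Multiset X} (h : ∀ y ∈ u, card u ≤ card (b.filter (y ≤ ·))) : MSLE u b := by
  induction u using Multiset.induction_on generalizing b with
  | empty => exact msle_zero _
  | cons x s ih =>
    have hx := h x (Multiset.mem_cons_self _ _)
    rw [Multiset.card_cons] at hx
    obtain ⟨z, hz⟩ := Multiset.card_pos_iff_exists_mem.1 (Nat.lt_of_lt_of_le (Nat.succ_pos _) hx)
    rw [Multiset.mem_filter] at hz
    obtain ⟨b', rfl⟩ := Multiset.exists_cons_of_mem hz.1
    refine msle_cons.2 ⟨z, b', hz.2, ih fun y hy => ?_, rfl⟩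
    have h1 := h y (Multiset.mem_cons_of_mem hy)
    rw [Multiset.card_cons, Multiset.filter_cons] at h1
    split_ifs at h1
    · rw [Multiset.card_add, Multiset.card_singleton] at h1; omega
    · rw [zero_add] at h1; omega

theorem replicate_msle {n : ℕ} {y : X} {w : Multiset X} (h : n ≤ card (w.filter (y ≤ ·))) :
    MSLE (replicate n y) w := by
  apply greedy
  intro z hz
  rw [Multiset.eq_of_mem_replicate hz, Multiset.card_replicate]
  exact h

theorem of_replicate_msle {n : ℕ} {y : X} {w : Multiset X} (h : MSLE (replicate n y) w) :
    n ≤ card (w.filter (y ≤ ·)) := by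
  have := msle_card (msle_filter (P := (y ≤ ·)) (fun a b hab h => h.trans hab) h)
  rwa [Multiset.filter_eq_self.2 (fun a ha => (Multiset.eq_of_mem_replicate ha).ge),
    Multiset.card_replicate] at this

/-- Ideals of multisets. -/
def IsMSIdeal (S : Set (Multiset X)) : Prop :=
  S.Nonempty ∧ (∀ u v : Multiset X, MSLE u v → v ∈ S → u ∈ S) ∧
      ∀ u ∈ S, ∀ v ∈ S, ∃ w ∈ S, MSLE u w ∧ MSLE v w

theorem IsMSIdeal.exists_ub {S : Set (Multiset X)} (hS : IsMSIdeal S) (L : List (Multiset X))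
    (hL : ∀ u ∈ L, u ∈ S) : ∃ w ∈ S, ∀ u ∈ L, MSLE u w := by
  induction L with
  | nil => exact ⟨hS.1.some, hS.1.some_mem, by simp⟩
  | cons a L ih =>
    obtain ⟨w, hw, h⟩ := ih fun u hu => hL u (List.mem_cons_of_mem _ hu)
    obtain ⟨w', hw', h1, h2⟩ := hS.2.2 w hw a (hL a List.mem_cons_self)
    refine ⟨w', hw', fun u hu => ?_⟩
    rcases List.mem_cons.1 hu with rfl | hu
    · exact h2
    · exact msle_trans (h u hu) h1

theorem msideal_odot {D E : Set (Multiset X)} (hD : IsMSIdeal D) (hE : IsMSIdeal E) :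
    IsMSIdeal (odot D E) := by
  refine ⟨⟨hD.1.some + hE.1.some, _, hD.1.some_mem, _, hE.1.some_mem, rfl⟩, ?_, ?_⟩
  · rintro u _ h ⟨a, ha, b, hb, rfl⟩
    obtain ⟨u₁, u₂, rfl, h1, h2⟩ := msle_add_split h
    exact ⟨u₁, hD.2.1 _ _ h1 ha, u₂, hE.2.1 _ _ h2 hb, rfl⟩
  · rintro _ ⟨a, ha, b, hb, rfl⟩ _ ⟨a', ha', b', hb', rfl⟩
    obtain ⟨w, hw, h1, h2⟩ := hD.2.2 a ha a' ha'
    obtain ⟨z, hz, h3, h4⟩ := hE.2.2 b hb b' hb'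
    exact ⟨w + z, ⟨w, hw, z, hz, rfl⟩, msle_add h1 h3, msle_add h2 h4⟩

theorem msle_singleton {x y : X} (h : x ≤ y) : MSLE ({x} : Multiset X) {y} :=
  msle_cons.2 ⟨y, 0, h, msle_zero _, rfl⟩

theorem msideal_opt {C : Set X} (hC : IsIdeal C) : IsMSIdeal (optDen C) := by
  refine ⟨⟨0, Or.inl rfl⟩, ?_, ?_⟩
  · rintro u v h hv
    induction u using Multiset.induction_on with
    | empty => exact Or.inl rfl
    | cons a s _ =>
      obtain ⟨y, v', hay, hs, rfl⟩ := msle_cons.1 h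
      rcases hv with hv | ⟨x, hx, hv⟩
      · exact absurd hv (Multiset.cons_ne_zero)
      · have hc := congrArg card hv
        simp at hc
        subst hc
        have := msle_card hs
        simp at this
        subst this
        have : y = x := by simpa using hv
        subst this
        exact Or.inr ⟨a, hC.2.1 hay hx, rfl⟩
  · rintro u hu v hv
    rcases hu with rfl | ⟨x, hx, rfl⟩
    · exact ⟨v, hv, msle_zero _, msle_refl _⟩
    rcases hv with rfl | ⟨y, hy, rfl⟩
    · exact ⟨_, Or.inr ⟨x, hx, rfl⟩, msle_refl _, msle_zero _⟩
    obtain ⟨z, hz, h1, h2⟩ := hC.2.2 x hx y hy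
    exact ⟨{z}, Or.inr ⟨z, hz, rfl⟩, msle_singleton h1, msle_singleton h2⟩

theorem msideal_star {A : Finset (Set X)} (hA : ∀ C ∈ A, IsIdeal C) : IsMSIdeal (starDen A) := by
  refine ⟨⟨0, by simp [starDen]⟩, ?_, ?_⟩
  · rintro u v ⟨t, ht, hr⟩ hv x hx
    obtain ⟨y, hy, hxy⟩ := Multiset.exists_mem_of_rel_of_mem hr hx
    obtain ⟨C, hC, hyC⟩ := hv y (Multiset.mem_of_le ht hy)
    exact ⟨C, hC, (hA C hC).2.1 hxy hyC⟩
  · intro u hu v hv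
    refine ⟨u + v, fun x hx => ?_, msle_of_le (Multiset.le_add_right _ _),
      msle_of_le (Multiset.le_add_left _ _)⟩
    rcases Multiset.mem_add.1 hx with h | h
    exacts [hu x h, hv x h]

theorem msideal_foldl (Cs : List (Set X)) (hCs : ∀ C ∈ Cs, IsIdeal C) (D : Set (Multiset X))
    (hD : IsMSIdeal D) : IsMSIdeal ((Cs.map optDen).foldl odot D) := by
  induction Cs generalizing D with
  | nil => exact hD
  | cons C Cs ih =>
    exact ih (fun C' h => hCs C' (List.mem_cons_of_mem _ h)) _
      (msideal_odot hD (msideal_opt (hCs C List.mem_cons_self)))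

theorem mem_foldl_of (Cs : List (Set X)) (D : Set (Multiset X)) {s : Multiset X} (hs : s ∈ D)
    {l : List X} (hl : List.Forall₂ (fun x C => x ∈ C) l Cs) :
    s + (l : Multiset X) ∈ (Cs.map optDen).foldl odot D := by
  induction Cs generalizing D s l with
  | nil =>
    cases hl
    simpa using hs
  | cons C Cs ih =>
    cases hl with
    | @cons x _ l _ hx hl =>
      have := ih (odot D (optDen C)) (s := s + {x}) ⟨s, hs, {x}, Or.inr ⟨x, hx, rfl⟩, rfl⟩ hl
      rw [← Multiset.cons_coe, Multiset.add_cons, ← Multiset.cons_add]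
      simpa [add_comm s] using this

theorem of_mem_foldl (Cs : List (Set X)) (hCs : ∀ C ∈ Cs, IsIdeal C) (D : Set (Multiset X))
    {m : Multiset X} (hm : m ∈ (Cs.map optDen).foldl odot D) :
    ∃ s ∈ D, ∃ l : List X, List.Forall₂ (fun x C => x ∈ C) l Cs ∧ MSLE m (s + (l : Multiset X)) := by
  induction Cs generalizing D with
  | nil => exact ⟨m, hm, [], List.Forall₂.nil, by simpa using msle_refl m⟩
  | cons C Cs ih =>
    obtain ⟨_, ⟨s, hs, b, hb, rfl⟩, l, hl, hml⟩ :=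
      ih (fun C' h => hCs C' (List.mem_cons_of_mem _ h)) _ hm
    have hb' : ∃ x ∈ C, MSLE b {x} := by
      rcases hb with rfl | ⟨x, hx, rfl⟩
      · obtain ⟨x, hx⟩ := (hCs C List.mem_cons_self).1
        exact ⟨x, hx, msle_zero _⟩
      · exact ⟨x, hx, msle_refl _⟩
    obtain ⟨x, hx, hbx⟩ := hb'
    refine ⟨s, hs, x :: l, List.Forall₂.cons hx hl, ?_⟩
    have : s + ((x :: l : List X) : Multiset X) = s + {x} + (l : Multiset X) := by
      rw [← Multiset.cons_coe, ← Multiset.singleton_add, add_assoc]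
    rw [this]
    exact msle_trans hml (msle_add (msle_add (msle_refl _) hbx) (msle_refl _))

theorem forall₂_ofFn_iff {N : ℕ} {l : List X} {C : Fin N → Set X} :
    List.Forall₂ (fun x C => x ∈ C) l (List.ofFn C) ↔ ∃ f : Fin N → X, (∀ i, f i ∈ C i) ∧ l = List.ofFn f := by
  induction N generalizing l with
  | zero => simp
  | succ N ih =>
    rw [List.ofFn_succ]
    constructor
    · intro h
      cases h with
      | @cons x _ l _ hx hl =>
        obtain ⟨f, hf, rfl⟩ := ih.1 hl
        refine ⟨Fin.cons x f, fun i => ?_, by simp [List.ofFn_succ]⟩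
        refine Fin.cases ?_ (fun i => ?_) i
        · simpa using hx
        · simpa using hf i
    · rintro ⟨f, hf, rfl⟩
      rw [List.ofFn_succ]
      exact List.Forall₂.cons (hf 0) (ih.2 ⟨_, fun i => hf i.succ, rfl⟩)

theorem msle_ofFn {N : ℕ} {f g : Fin N → X} (h : f ≤ g) :
    MSLE (List.ofFn f : Multiset X) (List.ofFn g : Multiset X) := by
  induction N with
  | zero => simpa using msle_zero _
  | succ N ih =>
    rw [List.ofFn_succ, List.ofFn_succ, ← Multiset.cons_coe, ← Multiset.cons_coe]
    exact msle_cons.2 ⟨_, _, h 0, ih (fun i => h i.succ), rfl⟩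

theorem exists_ofFn {N : ℕ} (m : Multiset X) (h : card m = N) :
    ∃ f : Fin N → X, m = (List.ofFn f : Multiset X) := by
  subst h
  induction m using Quotient.inductionOn with
  | h l => exact ⟨l.get, by simp⟩

theorem msideal_is_prod (hwqo : IsWqo X) {S : Set (Multiset X)} (hS : IsMSIdeal S) :
    ∃ (A : Finset (Set X)) (Cs : List (Set X)),
      (∀ C ∈ A, IsIdeal C) ∧ (∀ C ∈ Cs, IsIdeal C) ∧ S = msProdDen A Cs := by
  have := hwqo.inst
  let Y : LowerSet X := ⟨{x | ∀ n, replicate n x ∈ S}, fun a b hba ha n =>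
    hS.2.1 _ _ (replicate_msle (by
      rw [Multiset.filter_eq_self.2 (fun z hz => by rw [Multiset.eq_of_mem_replicate hz]; exact hba),
        Multiset.card_replicate])) (ha n)⟩
  have hYup : ∀ x y, x ≤ y → x ∉ Y → y ∉ Y := fun x y h hx hy => hx (Y.lower h hy)
  have hYmem : ∀ y ∈ Y, ∀ n, replicate n y ∈ S := fun y hy => hy
  have hYn : ∀ y, y ∉ Y → ∃ n, replicate n y ∉ S := fun y hy => not_forall.1 hy
  clear_value Y
  let c : Multiset X → ℕ := fun m => card (m.filter (· ∉ Y))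
  have hbdd : ∃ B, ∀ m ∈ S, c m ≤ B := by
    obtain ⟨F, hF, hF'⟩ := finite_basis (fun x : X => x ∉ Y)
    choose! n hn using hYn
    refine ⟨∑ b ∈ F, n b, fun m hm => ?_⟩
    have h1 : ∀ b ∈ F, card (m.filter (b ≤ ·)) ≤ n b := by
      intro b hb
      by_contra hcon
      exact hn b (hF b hb) (hS.2.1 _ _ (replicate_msle (not_le.1 hcon).le) hm)
    refine le_trans ?_ (Finset.sum_le_sum h1)
    clear h1 hm
    show card (m.filter (· ∉ Y)) ≤ _
    induction m using Multiset.induction_on with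
    | empty => simp
    | cons a s ih =>
      have hcons : ∀ (P : X → Prop) [DecidablePred P], card ((a ::ₘ s).filter P) = (if P a then 1 else 0) + card (s.filter P) := by
        intro P _
        rw [Multiset.filter_cons, Multiset.card_add]
        split_ifs <;> simp
      simp only [hcons, Finset.sum_add_distrib]
      refine add_le_add ?_ ih
      split_ifs with ha
      · exact Nat.zero_le _
      · obtain ⟨b, hb, hba⟩ := hF' a ha
        calc 1 = (if b ≤ a then 1 else 0) := by simp [hba]
          _ ≤ _ := Finset.single_le_sum (f := fun b => if b ≤ a then 1 else 0) (fun _ _ => Nat.zero_le _) hb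
  obtain ⟨t0, ht0, hmax⟩ : ∃ t0 ∈ S, ∀ m ∈ S, c m ≤ c t0 := by
    obtain ⟨B, hB⟩ := hbdd
    have hb : BddAbove (c '' S) := ⟨B, by rintro _ ⟨m, hm, rfl⟩; exact hB m hm⟩
    obtain ⟨t0, ht0, he⟩ := Nat.sSup_mem (hS.1.image c) hb
    exact ⟨t0, ht0, fun m hm => he ▸ le_csSup hb ⟨m, hm, rfl⟩⟩
  obtain ⟨N, hN⟩ : ∃ N, N = c t0 := ⟨_, rfl⟩
  have hcN : ∀ w ∈ S, ∀ t, MSLE t w → c t = N → c w = N := fun w hw t h ht =>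
    le_antisymm (hN ▸ hmax w hw) (ht ▸ msle_card (msle_filter hYup h))
  let D : LowerSet (Fin N → X) :=
    ⟨{f | ∃ w ∈ S, c w = N ∧ MSLE (List.ofFn f : Multiset X) (w.filter (· ∉ Y))},
      fun f g hgf ⟨w, hw, hc, h⟩ => ⟨w, hw, hc, msle_trans (msle_ofFn hgf) h⟩⟩
  obtain ⟨Is, hIs, hD⟩ := lowerSet_finite_ideals D
  have hcof : ∃ I ∈ Is, ∀ w ∈ S, ∃ f ∈ I, MSLE (w.filter (· ∉ Y)) (List.ofFn f : Multiset X) := by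
    by_contra hcon
    push Not at hcon
    choose! w hw hwf using hcon
    obtain ⟨z, hz, hzu⟩ := hS.exists_ub (t0 :: Is.toList.map w) (by
      intro u hu
      rcases List.mem_cons.1 hu with rfl | hu
      · exact ht0
      · obtain ⟨I, hI, rfl⟩ := List.mem_map.1 hu
        exact hw I (Finset.mem_toList.1 hI))
    have hcz := hcN z hz t0 (hzu t0 List.mem_cons_self) hN.symm
    obtain ⟨f, hf⟩ := exists_ofFn _ hcz
    have hfD : f ∈ D := ⟨z, hz, hcz, hf ▸ msle_refl _⟩
    obtain ⟨I, hI, hfI⟩ := (hD f).1 hfD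
    apply hwf I hI f hfI
    rw [← hf]
    exact msle_filter hYup (hzu _ (List.mem_cons_of_mem _ (List.mem_map.2 ⟨I, Finset.mem_toList.2 hI, rfl⟩)))
  obtain ⟨I, hI, hIc⟩ := hcof
  have hII := hIs I hI
  obtain ⟨A, hA, hAY⟩ := lowerSet_finite_ideals Y
  let C : Fin N → Set X := fun i => (fun f => f i) '' I
  have hC : ∀ C' ∈ List.ofFn C, IsIdeal C' := by
    intro C' hC'
    obtain ⟨i, rfl⟩ := (List.mem_ofFn' _ _).1 hC'
    refine ⟨hII.1.image _, ?_, ?_⟩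
    · rintro _ b hb ⟨f, hf, rfl⟩
      refine ⟨Function.update f i b, hII.2.1 ?_ hf, by simp⟩
      exact update_le_iff.2 ⟨hb, fun _ _ => le_rfl⟩
    · rintro _ ⟨f, hf, rfl⟩ _ ⟨g, hg, rfl⟩
      obtain ⟨h, hh, h1, h2⟩ := hII.2.2 f hf g hg
      exact ⟨h i, ⟨h, hh, rfl⟩, h1 i, h2 i⟩
  refine ⟨A, List.ofFn C, hA, hC, ?_⟩
  have hP := msideal_foldl (List.ofFn C) hC _ (msideal_star hA)
  ext m
  constructor
  · intro hm
    obtain ⟨f, hf, hle⟩ := hIc m hm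
    refine hP.2.1 m (m.filter (· ∈ Y) + (List.ofFn f : Multiset X)) ?_ ?_
    · conv_lhs => rw [← Multiset.filter_add_not (· ∈ Y) m]
      exact msle_add (msle_refl _) hle
    · refine mem_foldl_of _ _ ?_ (forall₂_ofFn_iff.2 ⟨f, fun i => ⟨f, hf, rfl⟩, rfl⟩)
      intro x hx
      exact (hAY x).1 (Multiset.mem_filter.1 hx).2
  · intro hm
    obtain ⟨s, hs, l, hl, hml⟩ := of_mem_foldl _ hC _ hm
    obtain ⟨f, hf, rfl⟩ := forall₂_ofFn_iff.1 hl
    have hfI : f ∈ I := ideal_pi hII f hf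
    obtain ⟨w0, hw0, hcw0, hfw0⟩ : f ∈ D := (hD f).2 ⟨I, hI, hfI⟩
    obtain ⟨w, hw, hwu⟩ := hS.exists_ub (w0 :: s.toList.map (fun y => replicate (N + card s) y)) (by
      intro u hu
      rcases List.mem_cons.1 hu with rfl | hu
      · exact hw0
      · obtain ⟨y, hy, rfl⟩ := List.mem_map.1 hu
        exact hYmem y ((hAY y).2 (hs y (Multiset.mem_toList.1 hy))) _)
    have hw0w := hwu w0 List.mem_cons_self
    have hcw : card (w.filter (· ∉ Y)) = N := hcN w hw w0 hw0w hcw0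
    refine hS.2.1 _ w (msle_trans hml ?_) hw
    rw [← Multiset.filter_add_not (· ∈ Y) w]
    refine msle_add (greedy fun y hy => ?_) (msle_trans hfw0 (msle_filter hYup hw0w))
    have h1 := of_replicate_msle (hwu _ (List.mem_cons_of_mem _
      (List.mem_map.2 ⟨y, Multiset.mem_toList.2 hy, rfl⟩)))
    rw [← Multiset.filter_add_not (· ∈ Y) w, Multiset.filter_add, Multiset.card_add] at h1
    have h2 : card ((w.filter (· ∉ Y)).filter (y ≤ ·)) ≤ N :=
      hcw ▸ Multiset.card_le_card (Multiset.filter_le _ _)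
    omega

end Helpers

/-- For a well quasi-ordered set `X`, the ideals of `(X^⊛, ≤⊛)` — equivalently, the
irreducible closed subsets of `X^⊛` in the Alexandroff topology of `≤⊛` — are exactly the
denotations of ⊛-products `A^⊛ ⊙ C₁^? ⊙ … ⊙ Cₙ^?` with `A` a finite set of ideals of `X`
and `C₁,…,Cₙ` ideals of `X`. -/
theorem stmt13 {X : Type*} [Preorder X] (hwqo : IsWqo X) (S : Set (Multiset X)) :
    (S.Nonempty ∧ (∀ u v : Multiset X, MSLE u v → v ∈ S → u ∈ S) ∧
      ∀ u ∈ S, ∀ v ∈ S, ∃ w ∈ S, MSLE u w ∧ MSLE v w) ↔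
    ∃ (A : Finset (Set X)) (Cs : List (Set X)),
      (∀ C ∈ A, IsIdeal C) ∧ (∀ C ∈ Cs, IsIdeal C) ∧ S = msProdDen A Cs := by
  constructor
  · exact fun hS => msideal_is_prod hwqo hS
  · rintro ⟨A, Cs, hA, hCs, rfl⟩
    exact msideal_foldl Cs hCs _ (msideal_star hA)
end

section
/- Let (X,≤) be a quasi-ordered set. On the set X* of finite words over X, the subword topology induced by the Alexandroff topology of (X,≤) coincides with the Alexandroff topology of the embedding quasi-ordering ≤* (i.e., the subword-open sets are exactly the ≤*-upward-closed sets). -/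
/-- The subword topology on `X*` induced by the Alexandroff topology of `(X, ≤)`: generated
by the sets `X*U₁X*U₂X*…X*UₙX*` with `U₁,…,Uₙ` open (i.e. upward closed) in `X`. -/
def subwordTopOfOrder (X : Type*) [Preorder X] : TopologicalSpace (List X) :=
  TopologicalSpace.generateFrom
    {S | ∃ Us : List (Set X), (∀ U ∈ Us, IsUpperSet U) ∧
      S = {w | WordEmb (fun (U : Set X) (x : X) => x ∈ U) Us w}}

/-- Transitivity of embedding through upward closed sets. -/
theorem wordEmb_mono {X : Type*} [Preorder X] {w w' : List X} (h : WordEmb (· ≤ ·) w w') :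
    ∀ Us : List (Set X), (∀ U ∈ Us, IsUpperSet U) →
      WordEmb (fun (U : Set X) (x : X) => x ∈ U) Us w →
      WordEmb (fun (U : Set X) (x : X) => x ∈ U) Us w' := by
  induction h with
  | nil l =>
    intro Us _ h
    cases h
    exact WordEmb.nil _
  | cons hab _ ih =>
    intro Us hU h
    cases h with
    | nil => exact WordEmb.nil _
    | cons hm h =>
      exact WordEmb.cons (hU _ (by simp) hab hm)
        (ih _ (fun U hm => hU U (List.mem_cons_of_mem _ hm)) h)
    | skip h => exact WordEmb.skip (ih _ hU h)
  | skip _ ih =>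
    intro Us hU h
    exact WordEmb.skip (ih _ hU h)

theorem wordEmb_Ici {X : Type*} [Preorder X] (w : List X) :
    ∀ w' : List X, WordEmb (fun (U : Set X) (x : X) => x ∈ U) (w.map Set.Ici) w' →
      WordEmb (· ≤ ·) w w' := by
  intro w'
  induction w' generalizing w with
  | nil =>
    intro h
    cases w with
    | nil => exact WordEmb.nil _
    | cons a l => cases h
  | cons b l ih =>
    intro h
    cases w with
    | nil => exact WordEmb.nil _
    | cons a t =>
      cases h with
      | cons hm h => exact WordEmb.cons hm (ih _ h)
      | skip h => exact WordEmb.skip (ih (a :: t) h)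

theorem wordEmb_self_Ici {X : Type*} [Preorder X] (w : List X) :
    WordEmb (fun (U : Set X) (x : X) => x ∈ U) (w.map Set.Ici) w := by
  induction w with
  | nil => exact WordEmb.nil _
  | cons a l ih => exact WordEmb.cons (le_refl a) ih

/-- For a quasi-ordered set `(X, ≤)`, the subword topology on `X*` induced by the Alexandroff
topology of `X` coincides with the Alexandroff topology of the embedding quasi-ordering `≤*`:
a set of words is subword-open iff it is upward closed for `≤*`. -/
theorem stmt14 {X : Type*} [Preorder X] (S : Set (List X)) :
    @IsOpen _ (subwordTopOfOrder X) S ↔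
    ∀ w w' : List X, WordEmb (· ≤ ·) w w' → w ∈ S → w' ∈ S := by
  constructor
  · intro h
    have h' : TopologicalSpace.GenerateOpen _ S := h
    induction h' with
    | basic s hs =>
      obtain ⟨Us, hU, rfl⟩ := hs
      intro w w' hw hm
      exact wordEmb_mono hw Us hU hm
    | univ => intros; trivial
    | inter s t hs ht ih1 ih2 =>
      intro w w' hw hm
      exact ⟨ih1 hs w w' hw hm.1, ih2 ht w w' hw hm.2⟩
    | sUnion C hC ih =>
      rintro w w' hw ⟨t, ht, hm⟩
      exact ⟨t, ht, ih t ht (hC t ht) w w' hw hm⟩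
  · intro h
    letI := subwordTopOfOrder X
    rw [isOpen_iff_forall_mem_open]
    intro w hw
    refine ⟨{w' | WordEmb (fun (U : Set X) (x : X) => x ∈ U) (w.map Set.Ici) w'}, ?_, ?_,
      wordEmb_self_Ici w⟩
    · intro w' hw'
      exact h w w' (wordEmb_Ici w w' hw') hw
    · refine TopologicalSpace.GenerateOpen.basic _ ⟨w.map Set.Ici, ?_, rfl⟩
      intro U hU
      obtain ⟨a, _, rfl⟩ := List.mem_map.1 hU
      exact isUpperSet_Ici a
end

section
/- Let (X,≤) be a quasi-ordered set. On the set X^⊛ of finite multisets over X, the sub-multiset topology induced by the Alexandroff topology of (X,≤) coincides with the Alexandroff topology of the quasi-ordering ≤⊛ (i.e., the sub-multiset-open sets are exactly the ≤⊛-upward-closed sets). -/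
/-- The basic set `X^⊛ ⊙ U₁ ⊙ U₂ ⊙ … ⊙ Uₙ`: the multisets containing a sub-multiset whose
elements match `U₁,…,Uₙ` bijectively. -/
def msBasic {X : Type*} (Us : List (Set X)) : Set (Multiset X) :=
  {m | ∃ t ≤ m, Multiset.Rel (fun (U : Set X) (x : X) => x ∈ U) ↑Us t}

/-- The sub-multiset topology on `X^⊛` induced by the Alexandroff topology of `(X, ≤)`:
generated by the sets `X^⊛ ⊙ U₁ ⊙ … ⊙ Uₙ` with `U₁,…,Uₙ` open (i.e. upward closed) in `X`. -/
def submultisetTopOfOrder (X : Type*) [Preorder X] : TopologicalSpace (Multiset X) :=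
  TopologicalSpace.generateFrom
    {S | ∃ Us : List (Set X), (∀ U ∈ Us, IsUpperSet U) ∧ S = msBasic Us}

theorem ms_rel_up {X : Type*} [Preorder X] {Us : Multiset (Set X)} {t s : Multiset X}
    (h : Multiset.Rel (fun (U : Set X) (x : X) => x ∈ U) Us t) (hU : ∀ U ∈ Us, IsUpperSet U)
    (hs : Multiset.Rel (· ≤ ·) t s) :
    Multiset.Rel (fun (U : Set X) (x : X) => x ∈ U) Us s := by
  induction h generalizing s with
  | zero =>
    rw [Multiset.rel_zero_left] at hs
    subst hs
    exact Multiset.Rel.zero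
  | cons hab _ ih =>
    rw [Multiset.rel_cons_left] at hs
    obtain ⟨b', s', hb, hs', rfl⟩ := hs
    exact Multiset.Rel.cons (hU _ (Multiset.mem_cons_self _ _) hb hab)
      (ih (fun U h => hU U (Multiset.mem_cons_of_mem h)) hs')

theorem ms_basic_up {X : Type*} [Preorder X] {Us : List (Set X)} (hU : ∀ U ∈ Us, IsUpperSet U)
    {m m' : Multiset X} (h : MSLE m m') (hm : m ∈ msBasic Us) : m' ∈ msBasic Us := by
  obtain ⟨t', ht', hr⟩ := h
  obtain ⟨t, ht, hrt⟩ := hm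
  obtain ⟨u, rfl⟩ := Multiset.le_iff_exists_add.1 ht
  rw [Multiset.rel_add_left] at hr
  obtain ⟨a, b, ha, _, rfl⟩ := hr
  exact ⟨a, (Multiset.le_add_right a b).trans ht', ms_rel_up hrt (by simpa using hU) ha⟩

theorem ms_basic_Ici {X : Type*} [Preorder X] (l : List X) (m' : Multiset X) :
    m' ∈ msBasic (l.map Set.Ici) ↔ MSLE (l : Multiset X) m' := by
  unfold msBasic MSLE
  simp only [Set.mem_setOf_eq, ← Multiset.map_coe, Multiset.rel_map_left, Set.mem_Ici]

theorem ms_refl {X : Type*} [Preorder X] (m : Multiset X) : MSLE m m :=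
  ⟨m, le_rfl, Multiset.rel_refl_of_refl_on fun x _ => le_refl x⟩

/-- For a quasi-ordered set `(X, ≤)`, the sub-multiset topology on `X^⊛` induced by the
Alexandroff topology of `X` coincides with the Alexandroff topology of `≤⊛`: a set of finite
multisets is sub-multiset-open iff it is upward closed for `≤⊛`. -/
theorem stmt15 {X : Type*} [Preorder X] (S : Set (Multiset X)) :
    @IsOpen _ (submultisetTopOfOrder X) S ↔
    ∀ m m' : Multiset X, MSLE m m' → m ∈ S → m' ∈ S := by
  constructor
  · intro h
    change TopologicalSpace.GenerateOpen _ S at h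
    induction h with
    | basic s hs =>
      obtain ⟨Us, hU, rfl⟩ := hs
      exact fun m m' h hm => ms_basic_up hU h hm
    | univ => exact fun _ _ _ _ => trivial
    | inter s t _ _ ihs iht =>
      exact fun m m' h hm => ⟨ihs m m' h hm.1, iht m m' h hm.2⟩
    | sUnion K _ ih =>
      rintro m m' h ⟨s, hs, hm⟩
      exact ⟨s, hs, ih s hs m m' h hm⟩
  · intro h
    letI := submultisetTopOfOrder X
    refine isOpen_iff_forall_mem_open.2 fun m hm => ?_
    obtain ⟨l, rfl⟩ := Quot.exists_rep m
    refine ⟨msBasic (l.map Set.Ici), fun m' hm' => h _ m' ((ms_basic_Ici l m').1 hm') hm, ?_,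
      (ms_basic_Ici l _).2 (ms_refl _)⟩
    refine TopologicalSpace.isOpen_generateFrom_of_mem ⟨_, ?_, rfl⟩
    intro U hU
    obtain ⟨x, _, rfl⟩ := List.mem_map.1 hU
    exact isUpperSet_Ici x
end

section
/- If X is a Noetherian topological space, then the set X* of finite words over X equipped with the subword topology is Noetherian. -/
/-- The subword topology on `X*` for a topological space `X`: the smallest topology
containing the sets `X*U₁X*U₂X*…X*UₙX*` with `U₁,…,Uₙ` open in `X`. -/
def subwordTop (X : Type*) [TopologicalSpace X] : TopologicalSpace (List X) :=
  TopologicalSpace.generateFrom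
    {S | ∃ Us : List (Set X), (∀ U ∈ Us, IsOpen U) ∧
      S = {w | WordEmb (fun (U : Set X) (x : X) => x ∈ U) Us w}}

open TopologicalSpace in
theorem exists_good_subseq {X : Type*} [TopologicalSpace X] [NoetherianSpace X]
    (A : ℕ → Set X) (x : ℕ → X) (hA : ∀ n, IsOpen (A n)) (hx : ∀ n, x n ∈ A n) :
    ∃ f : ℕ → ℕ, ∀ m n, m < n → f m < f n ∧ x (f n) ∈ A (f m) := by
  have hwf : WellFounded (fun a b : Opens X => a > b) := wellFounded_gt
  obtain ⟨O, hO, hmax⟩ := hwf.has_min {O : Opens X | {n | x n ∉ O}.Infinite}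
    ⟨⊥, by
      have : {n | x n ∉ (⊥ : Opens X)} = Set.univ := by ext; simp
      simp only [Set.mem_ofPred_eq, this]
      exact Set.infinite_univ⟩
  have hfin : ∀ n, x n ∉ O → {k | x k ∉ O ∧ x k ∉ A n}.Finite := by
    intro n hn
    by_contra hinf
    refine hmax (O ⊔ ⟨A n, hA n⟩) ?_ ?_
    · have : {k | x k ∉ O ⊔ (⟨A n, hA n⟩ : Opens X)} = {k | x k ∉ O ∧ x k ∉ A n} := by
        ext k
        simp only [Set.mem_ofPred_eq, Opens.mem_sup, not_or]
        rfl
      simp only [Set.mem_ofPred_eq, this]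
      exact hinf
    · refine lt_of_le_of_ne le_sup_left ?_
      intro h
      apply hn
      rw [h, Opens.mem_sup]
      exact Or.inr (hx n)
  obtain ⟨f, -, hf⟩ := exists_seq_of_forall_finset_exists (fun n => x n ∉ O)
    (fun m n => m < n ∧ x n ∈ A m) (by
      intro s hs
      have h1 : (⋃ m ∈ s, ({k | x k ∉ O ∧ x k ∉ A m} ∪ Set.Iic m)).Finite :=
        s.finite_toSet.biUnion (fun m hm => (hfin m (hs m hm)).union (Set.finite_Iic m))
      obtain ⟨y, hy, hy'⟩ := (Set.Infinite.sdiff hO h1).nonempty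
      refine ⟨y, hy, fun m hm => ?_⟩
      simp only [Set.mem_iUnion, not_exists, Set.mem_union, not_or, Set.mem_Iic, not_le] at hy'
      have h2 := hy' m hm
      exact ⟨h2.2, by_contra fun h => h2.1 ⟨hy, h⟩⟩)
  exact ⟨f, hf⟩

theorem WordEmb.cons_split {X : Type*} {A : Set X} {v : List (Set X)} {u : List X}
    (h : WordEmb (fun (U : Set X) (x : X) => x ∈ U) (A :: v) u) :
    ∃ x q, x ∈ A ∧ WordEmb (fun (U : Set X) (x : X) => x ∈ U) v q ∧
      ∀ w : List (Set X), (WordEmb (fun (U : Set X) (x : X) => x ∈ U) w q →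
        WordEmb (fun (U : Set X) (x : X) => x ∈ U) w u) ∧
        ∀ B : Set X, x ∈ B → WordEmb (fun (U : Set X) (x : X) => x ∈ U) w q →
          WordEmb (fun (U : Set X) (x : X) => x ∈ U) (B :: w) u := by
  induction u with
  | nil => cases h
  | cons b u ih =>
    cases h with
    | cons hb h => exact ⟨b, u, hb, h, fun w => ⟨fun h => .skip h, fun B hB h => .cons hB h⟩⟩
    | skip h =>
      obtain ⟨x, q, hx, hq, H⟩ := ih h
      exact ⟨x, q, hx, hq, fun w => ⟨fun h => .skip ((H w).1 h),
        fun B hB h => .skip ((H w).2 B hB h)⟩⟩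

/-- Topological Higman lemma, in minimal bad sequence form. -/
theorem higman_pairs {X : Type*} [TopologicalSpace X] [TopologicalSpace.NoetherianSpace X] :
    Set.PartiallyWellOrderedOn
      {p : List (Set X) × List X | (∀ U ∈ p.1, IsOpen U) ∧
        WordEmb (fun (U : Set X) (x : X) => x ∈ U) p.1 p.2}
      (fun p p' => WordEmb (fun (U : Set X) (x : X) => x ∈ U) p.1 p'.2) := by
  rw [Set.PartiallyWellOrderedOn.iff_not_exists_isMinBadSeq (fun p => p.1.length)]
  rintro ⟨p, ⟨hmem, hbad⟩, hmin⟩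
  have hsplit : ∀ n, ∃ A v, (p n).1 = A :: v := by
    intro n
    rcases h : (p n).1 with _ | ⟨A, v⟩
    · exact (hbad n (n + 1) (Nat.lt_succ_self n) (by simp only [h]; exact .nil _)).elim
    · exact ⟨A, v, rfl⟩
  choose A v hAv using hsplit
  have hsp : ∀ n, _ := fun n => WordEmb.cons_split (hAv n ▸ (hmem n).2)
  choose x q hx hq H using hsp
  have hop : ∀ n, IsOpen (A n) := fun n => (hmem n).1 _ (by simp [hAv n])
  have hov : ∀ n, ∀ U ∈ v n, IsOpen U := fun n U hU => (hmem n).1 _ (by simp [hAv n, hU])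
  obtain ⟨f, hf⟩ := exists_good_subseq A x hop hx
  have hf0 : ∀ n, f 0 ≤ f n := by
    intro n
    rcases Nat.eq_zero_or_pos n with rfl | h
    · exact le_rfl
    · exact (hf 0 n h).1.le
  refine hmin (f 0) (fun n => if n < f 0 then p n else (v (f (n - f 0)), q (f (n - f 0))))
    ?_ ?_ ?_
  · intro m hm
    simp [hm]
  · simp [hAv]
  · constructor
    · intro n
      by_cases hn : n < f 0
      · simpa only [hn, if_true] using hmem n
      · simp only [hn, if_false]
        exact ⟨hov _, hq _⟩
    · intro m n hmn hr
      by_cases hn : n < f 0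
      · have hm : m < f 0 := hmn.trans hn
        simp only [hn, hm, if_true] at hr
        exact hbad m n hmn hr
      · by_cases hm : m < f 0
        · simp only [hn, hm, if_true, if_false] at hr
          exact hbad m (f (n - f 0)) (hm.trans_le (hf0 _)) ((H _ _).1 hr)
        · simp only [hn, hm, if_false] at hr
          have hlt := hf (m - f 0) (n - f 0) (by omega)
          refine hbad _ _ hlt.1 ?_
          simp only [hAv]
          exact (H _ _).2 _ hlt.2 hr

/-- If `X` is a Noetherian topological space, then `X*` with the subword topology is
Noetherian. -/
theorem stmt16 {X : Type*} [TopologicalSpace X] [TopologicalSpace.NoetherianSpace X] :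
    @TopologicalSpace.NoetherianSpace (List X) (subwordTop X) := by
  letI := subwordTop X
  rw [TopologicalSpace.noetherianSpace_iff_isCompact]
  intro s
  refine isCompact_generateFrom rfl ?_
  intro P hP hs
  by_contra hcon
  push Not at hcon
  obtain ⟨f, hf, hf'⟩ := exists_seq_of_forall_finset_exists
    (fun p : List (Set X) × List X => ((∀ U ∈ p.1, IsOpen U) ∧
        WordEmb (fun (U : Set X) (x : X) => x ∈ U) p.1 p.2) ∧
        {w | WordEmb (fun (U : Set X) (x : X) => x ∈ U) p.1 w} ∈ P)
    (fun p p' => ¬ WordEmb (fun (U : Set X) (x : X) => x ∈ U) p.1 p'.2) (by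
      intro t ht
      have h := hcon ((fun p : List (Set X) × List X =>
        {w | WordEmb (fun (U : Set X) (x : X) => x ∈ U) p.1 w}) '' (t : Set _))
        (by rintro _ ⟨p, hp, rfl⟩; exact (ht p hp).2) (t.finite_toSet.image _)
      obtain ⟨u, hus, hu⟩ := Set.not_subset.1 h
      obtain ⟨S, hSP, huS⟩ := hs hus
      obtain ⟨Us, hUs, rfl⟩ := hP hSP
      exact ⟨(Us, u), ⟨⟨hUs, huS⟩, hSP⟩, fun p hp hr => hu ⟨_, ⟨p, hp, rfl⟩, hr⟩⟩)
  obtain ⟨m, n, hmn, h⟩ := higman_pairs.exists_lt (f := f) (fun n => (hf n).1)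
  exact hf' m n hmn h
end

section
/- If X is a Noetherian topological space, then the set X^⊛ of finite multisets over X equipped with the sub-multiset topology is Noetherian. -/
/-- The sub-multiset topology on `X^⊛` for a topological space `X`: the smallest topology
containing the sets `X^⊛ ⊙ U₁ ⊙ … ⊙ Uₙ` with `U₁,…,Uₙ` open in `X`. -/
def submultisetTop (X : Type*) [TopologicalSpace X] : TopologicalSpace (Multiset X) :=
  TopologicalSpace.generateFrom
    {S | ∃ Us : List (Set X), (∀ U ∈ Us, IsOpen U) ∧ S = msBasic Us}

theorem ms_min_bad {α : Type*} (len : α → ℕ) (Bad : (ℕ → α) → Prop)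
    (hlim : ∀ w, (∀ n, ∃ t, Bad t ∧ ∀ i < n, t i = w i) → Bad w)
    (s : ℕ → α) (hs : Bad s) :
    ∃ w, Bad w ∧ ∀ n t, Bad t → (∀ i < n, t i = w i) → len (w n) ≤ len (t n) := by
  have step : ∀ (n : ℕ) (u : {s // Bad s}), ∃ v : {s // Bad s}, (∀ i < n, v.1 i = u.1 i) ∧
      ∀ t, Bad t → (∀ i < n, t i = u.1 i) → len (v.1 n) ≤ len (t n) := by
    intro n u
    let T : Set {s // Bad s} := {v | ∀ i < n, v.1 i = u.1 i}
    have hT : T.Nonempty := ⟨u, fun _ _ => rfl⟩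
    obtain ⟨v, hv, hmin⟩ := exists_minimalFor_of_wellFoundedLT (· ∈ T)
      (fun v : {s // Bad s} => len (v.1 n)) hT
    refine ⟨v, hv, fun t ht hti => ?_⟩
    by_contra hlt
    have := hmin (j := ⟨t, ht⟩) hti (by simp only; omega)
    simp only at this
    omega
  choose F hF1 hF2 using step
  let S : ℕ → {s // Bad s} := fun n => Nat.rec ⟨s, hs⟩ (fun n u => F n u) n
  have hS : ∀ n, S (n + 1) = F n (S n) := fun n => rfl
  have agree : ∀ m i, i < m → (S m).1 i = (S (i + 1)).1 i := by
    intro m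
    induction m with
    | zero => intro i hi; omega
    | succ m ih =>
      intro i hi
      rcases Nat.lt_succ_iff_lt_or_eq.1 hi with h | h
      · rw [hS m, hF1 m (S m) i h, ih i h]
      · rw [h]
  refine ⟨fun n => (S (n + 1)).1 n, hlim _ fun n => ⟨(S n).1, (S n).2, fun i hi => agree n i hi⟩, ?_⟩
  intro n t ht hti
  refine hF2 n (S n) t ht fun i hi => ?_
  rw [hti i hi, agree n i hi]

theorem ms_cons_iff {X : Type*} (U : Set X) (Us : List (Set X)) (m : Multiset X) :
    m ∈ msBasic (U :: Us) ↔ ∃ x m', x ∈ U ∧ m' ∈ msBasic Us ∧ m = x ::ₘ m' := by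
  constructor
  · rintro ⟨t, htm, ht⟩
    rw [← Multiset.cons_coe, Multiset.rel_cons_left] at ht
    obtain ⟨x, t', hx, ht', rfl⟩ := ht
    obtain ⟨r, rfl⟩ := Multiset.le_iff_exists_add.1 htm
    exact ⟨x, t' + r, hx, ⟨t', Multiset.le_add_right _ _, ht'⟩, by simp⟩
  · rintro ⟨x, m', hx, ⟨t, ht, hr⟩, rfl⟩
    refine ⟨x ::ₘ t, Multiset.cons_le_cons _ ht, ?_⟩
    rw [← Multiset.cons_coe]
    exact Multiset.Rel.cons hx hr

theorem ms_nil {X : Type*} (m : Multiset X) : m ∈ msBasic ([] : List (Set X)) :=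
  ⟨0, Multiset.zero_le _, Multiset.Rel.zero⟩

theorem ms_upward {X : Type*} (Us : List (Set X)) {m m' : Multiset X} (h : m ≤ m')
    (hm : m ∈ msBasic Us) : m' ∈ msBasic Us := by
  obtain ⟨t, ht, hr⟩ := hm
  exact ⟨t, ht.trans h, hr⟩

/-- Extraction of a subsequence with `x (f k) ∈ U (f j)` for `j < k`. -/
theorem ms_extract {X : Type*} [TopologicalSpace X] [TopologicalSpace.NoetherianSpace X]
    (U : ℕ → Set X) (hU : ∀ n, IsOpen (U n)) (x : ℕ → X) (hx : ∀ n, x n ∈ U n) :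
    ∃ f : ℕ → ℕ, ∀ j k, j < k → f j < f k ∧ x (f k) ∈ U (f j) := by
  let F : Ultrafilter ℕ := Filter.hyperfilter ℕ
  let I : Set ℕ := {i | {n | x n ∈ U i} ∈ F}
  have hI : I ∈ F := by
    by_contra hI
    have hIc : Iᶜ ∈ F := Ultrafilter.compl_mem_iff_notMem.2 hI
    obtain ⟨S, hS⟩ := (TopologicalSpace.NoetherianSpace.isCompact
      (⋃ i : ↥Iᶜ, U i)).elim_finite_subcover (fun i : ↥Iᶜ => U i) (fun i => hU i) subset_rfl
    have hsub : Iᶜ ⊆ ⋃ i ∈ S, {n | x n ∈ U i} := by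
      intro n hn
      have := hS (Set.mem_iUnion.2 ⟨⟨n, hn⟩, hx n⟩)
      simpa using this
    have h2 := Filter.mem_of_superset hIc hsub
    have h3 := (Ultrafilter.finite_biUnion_mem_iff S.finite_toSet).1 h2
    obtain ⟨i, -, hi⟩ := h3
    exact i.2 hi
  obtain ⟨f, -, hf⟩ := exists_seq_of_forall_finset_exists (· ∈ I)
    (fun i n => i < n ∧ x n ∈ U i) (by
      intro s hs
      have h1 : (⋂ i ∈ s, {n | i < n ∧ x n ∈ U i}) ∈ (F : Filter ℕ) := by
        rw [Filter.biInter_finset_mem]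
        intro i hi
        refine Filter.inter_mem ?_ (hs i hi)
        exact Nat.hyperfilter_le_atTop (Filter.Ioi_mem_atTop i)
      obtain ⟨n, hn1, hn2⟩ := Filter.nonempty_of_mem (Filter.inter_mem hI h1)
      refine ⟨n, hn1, fun i hi => ?_⟩
      simpa using Set.mem_iInter₂.1 hn2 i hi)
  exact ⟨f, hf⟩

/-- Every sequence of basic sets is good. -/
theorem ms_good {X : Type*} [TopologicalSpace X] [TopologicalSpace.NoetherianSpace X]
    (s : ℕ → List (Set X)) (hs : ∀ n, ∀ U ∈ s n, IsOpen U)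
    (hbad : ∀ n, ∃ m ∈ msBasic (s n), ∀ i < n, m ∉ msBasic (s i)) : False := by
  obtain ⟨w, ⟨hwo, hwb⟩, hmin⟩ := ms_min_bad List.length
    (fun s : ℕ → List (Set X) => (∀ n, ∀ U ∈ s n, IsOpen U) ∧
      ∀ n, ∃ m ∈ msBasic (s n), ∀ i < n, m ∉ msBasic (s i)) (by
      intro w hw
      refine ⟨fun n => ?_, fun n => ?_⟩
      · obtain ⟨t, ⟨h1, -⟩, h⟩ := hw (n + 1)
        rw [← h n (by omega)]; exact h1 n
      · obtain ⟨t, ⟨-, h1⟩, h⟩ := hw (n + 1)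
        obtain ⟨m, hm, hm'⟩ := h1 n
        refine ⟨m, by rwa [← h n (by omega)], fun i hi => ?_⟩
        rw [← h i (by omega)]; exact hm' i hi) s ⟨hs, hbad⟩
  have hne : ∀ n, ∃ U Us, w n = U :: Us := by
    intro n
    rcases h : w n with _ | ⟨U, Us⟩
    · obtain ⟨m, -, hm⟩ := hwb (n + 1)
      exact absurd (h ▸ ms_nil m) (hm n (by omega))
    · exact ⟨U, Us, rfl⟩
  choose U w' hw using hne
  have hwit : ∀ n, ∃ x m, x ∈ U n ∧ m ∈ msBasic (w' n) ∧
      ∀ i < n, (x ::ₘ m) ∉ msBasic (w i) := by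
    intro n
    obtain ⟨m, hm, hm'⟩ := hwb n
    rw [hw n, ms_cons_iff] at hm
    obtain ⟨x, m', hx, hm1, rfl⟩ := hm
    exact ⟨x, m', hx, hm1, hm'⟩
  choose x m hx hm hnot using hwit
  obtain ⟨f, hf⟩ := ms_extract U (fun n => hwo n _ (by simp [hw n])) x hx
  have hf0 : ∀ k, f 0 ≤ f k := by
    intro k
    rcases Nat.eq_zero_or_pos k with rfl | hk
    · exact le_rfl
    · exact (hf 0 k hk).1.le
  have hlow : ∀ n, ∀ i < n, m n ∉ msBasic (w i) := fun n i hi h =>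
    hnot n i hi (ms_upward _ (Multiset.le_cons_self _ _) h)
  have key := hmin (f 0) (fun n => if n < f 0 then w n else w' (f (n - f 0))) ⟨?_, ?_⟩
    (fun i hi => by simp [hi])
  · simp [hw (f 0)] at key
  · intro n V hV
    split_ifs at hV
    · exact hwo n V hV
    · exact hwo _ V (by rw [hw]; exact List.mem_cons_of_mem _ hV)
  · intro n
    by_cases hn : n < f 0
    · obtain ⟨a, ha, ha'⟩ := hwb n
      refine ⟨a, by simpa [hn] using ha, fun i hi => ?_⟩
      have : i < f 0 := by omega
      simpa [this] using ha' i hi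
    · refine ⟨m (f (n - f 0)), by simpa [hn] using hm _, fun i hi => ?_⟩
      by_cases hi0 : i < f 0
      · simp only [hi0, if_true]
        exact hlow _ i (lt_of_lt_of_le hi0 (hf0 _))
      · simp only [hi0, if_false]
        intro hmem
        obtain ⟨h1, h2⟩ := hf (i - f 0) (n - f 0) (by omega)
        refine hnot _ _ h1 ?_
        rw [hw (f (i - f 0)), ms_cons_iff]
        exact ⟨_, _, h2, hmem, rfl⟩

/-- If `X` is a Noetherian topological space, then `X^⊛` with the sub-multiset topology is
Noetherian. -/
theorem stmt17 {X : Type*} [TopologicalSpace X] [TopologicalSpace.NoetherianSpace X] :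
    @TopologicalSpace.NoetherianSpace (Multiset X) (submultisetTop X) := by
  let _ : TopologicalSpace (Multiset X) := submultisetTop X
  rw [TopologicalSpace.noetherianSpace_iff_isCompact]
  intro K
  refine isCompact_generateFrom rfl fun P hP hKP => ?_
  by_contra hcon
  push Not at hcon
  obtain ⟨p, hp, hr⟩ := exists_seq_of_forall_finset_exists
    (fun p : List (Set X) × Multiset X =>
      (∀ U ∈ p.1, IsOpen U) ∧ msBasic p.1 ∈ P ∧ p.2 ∈ msBasic p.1)
    (fun p q => q.2 ∉ msBasic p.1) (by
      intro s hs
      have h := hcon ((fun p : List (Set X) × Multiset X => msBasic p.1) '' (s : Set _))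
        (by rintro _ ⟨p, hp, rfl⟩; exact (hs p hp).2.1) (s.finite_toSet.image _)
      obtain ⟨k, hk, hk'⟩ := Set.not_subset.1 h
      obtain ⟨B, hB, hkB⟩ := hKP hk
      obtain ⟨Us, hUs, rfl⟩ := hP hB
      refine ⟨(Us, k), ⟨hUs, hB, hkB⟩, fun q hq hmem => hk' ?_⟩
      exact ⟨_, ⟨q, hq, rfl⟩, hmem⟩)
  exact ms_good (fun n => (p n).1) (fun n => (hp n).1)
    fun n => ⟨(p n).2, (hp n).2.2, fun i hi => hr i n hi⟩
end

section
/- If X is a Noetherian topological space, then the powerset P(X) equipped with the lower Vietoris topology is Noetherian. -/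
/-- The lower Vietoris topology on the powerset `P(X)`: the smallest topology containing the
sets `◇U = {A ⊆ X | A ∩ U ≠ ∅}` for `U` open in `X`. -/
def lowerVietoris (X : Type*) [TopologicalSpace X] : TopologicalSpace (Set X) :=
  TopologicalSpace.generateFrom
    {T | ∃ U : Set X, IsOpen U ∧ T = {A : Set X | (A ∩ U).Nonempty}}

/-- If `X` is a Noetherian topological space, then the powerset `P(X)` with the lower
Vietoris topology is Noetherian. -/
theorem stmt18 {X : Type*} [TopologicalSpace X] [TopologicalSpace.NoetherianSpace X] :
    @TopologicalSpace.NoetherianSpace (Set X) (lowerVietoris X) := by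
  letI := lowerVietoris X
  rw [TopologicalSpace.noetherianSpace_iff_isCompact]
  intro s
  rw [isCompact_iff_ultrafilter_le_nhds]
  intro f hf
  -- the family of opens `U` with `◇U ∉ f` is directed and has a maximal element `W`
  obtain ⟨W, hW, hmax⟩ := (wellFounded_gt (α := TopologicalSpace.Opens X)).has_min
    {U | {A : Set X | (A ∩ (U : Set X)).Nonempty} ∉ f} ⟨⊥, by simp⟩
  have hle : ∀ U : TopologicalSpace.Opens X,
      {A : Set X | (A ∩ (U : Set X)).Nonempty} ∉ f → U ≤ W := by
    intro U hU
    by_contra hUW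
    refine hmax (W ⊔ U) ?_ (left_lt_sup.2 hUW)
    have h : {A : Set X | (A ∩ ((W ⊔ U : TopologicalSpace.Opens X) : Set X)).Nonempty} =
        {A : Set X | (A ∩ (W : Set X)).Nonempty} ∪ {A : Set X | (A ∩ (U : Set X)).Nonempty} := by
      ext A
      simp [Set.inter_union_distrib_left, Set.union_nonempty]
    rw [Set.mem_setOf_eq, h, Ultrafilter.union_mem_iff]
    exact not_or.2 ⟨hW, hU⟩
  -- every `A` in the complement of `◇W` is a limit of `f`
  have hs : s ∈ f := Filter.le_principal_iff.1 hf
  obtain ⟨A, hAs, hA⟩ := f.nonempty_of_mem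
    (Filter.inter_mem hs (Ultrafilter.compl_mem_iff_notMem.2 hW))
  refine ⟨A, hAs, ?_⟩
  have key : nhds A = ⨅ t ∈ {t | A ∈ t ∧ t ∈ {T | ∃ U : Set X, IsOpen U ∧
      T = {A : Set X | (A ∩ U).Nonempty}}}, Filter.principal t :=
    TopologicalSpace.nhds_generateFrom
  rw [key]
  refine le_iInf₂ ?_
  rintro _ ⟨hAU, U, hU, rfl⟩
  rw [Filter.le_principal_iff]
  by_contra hn
  obtain ⟨x, hxA, hxU⟩ := hAU
  exact hA ⟨x, hxA, hle ⟨U, hU⟩ hn hxU⟩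
end
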